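/- arXiv:2003.07810 — 6 statements merged into one kernel-verified Lean document; each statement's English description precedes it below -/
import Mathlib

section
/- There exists a universal constant K > 0 such that the following holds. Let G = (V, E) be a simple graph with n vertices, m edges, and maximum degree d, and let ε ∈ (0, 1) with m ≥ 2·⌈n/ε²⌉. Then there exists a subset F ⊆ E with |F| = ⌈n/ε²⌉ such that, writing m̃ := |F|, the subgraph G̃ = (V, F) satisfies 2·(m/m̃)·D_{G̃} − 2·D_G − K·ε·d·I_n ⪯ (m/m̃)·L_{G̃} − L_G ⪯ K·ε·d·I_n, where D_G and D_{G̃} are the diagonal degree matrices of G and G̃, L_G is the Laplacian of G, and L_{G̃} := Σ_{e ∈ F} b_e b_eᵀ. -/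
open Matrix BigOperators

/-!
Write `s_e = χ_u + χ_v` for an edge `e = uv`. The signless Laplacian `∑ s_e s_eᵀ` equals `2 D - L`,
so the lower bound on the Laplacian of `F` is an upper bound on its signless Laplacian. It therefore
suffices to find one `F` satisfying an upper bound for both of the families `b` and `s`, and a
barrier argument in the style of Batson, Spielman and Srivastava achieves this for any finite number
`q` of families of vectors `v_e` with `∑ v_e v_eᵀ ⪯ ℓ I`; here `q = 2` and `ℓ = 2 d`.

Edges are moved into `F` one at a time. Let `S` be the set of the edges not yet moved, `R` the
average of `v_e v_eᵀ` over `S`, and `M` the average over all `m` edges. The invariant is that each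
`P = u I - (M - R)` is positive definite and that the potential, the sum of `tr P⁻¹` over the
families, is at most its initial value. Removing `e` from `S` changes `R` by
`(R - v_e v_eᵀ) / (|S| - 1)`, whose mean over `e ∈ S` is zero. The effect on the potential is
therefore of second order: by the Sherman–Morrison formula, convexity of `P ↦ tr P⁻¹` and averaging
over `S`, raising `u` by `δ = 4 ε ℓ / m²` compensates for it for some `e ∈ S`.

With `k` edges to move, `n ≤ ε² k`, and the initial barrier `8 q ε ℓ k / m²`, the final barrier is
`(8 q + 4) ε ℓ k / m²`. Rescaling the final invariant by `|S| m / k ≤ m² / k` gives the error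
`(8 q + 4) ε ℓ`, which is `40 ε d` for the two families above.
-/

section

open Finset
open scoped MatrixOrder

section InverseTrace

variable {V : Type*} [Fintype V]

theorem trace_mul_nonneg_of_nonneg {X Y : Matrix V V ℝ} (hX : 0 ≤ X) (hY : 0 ≤ Y) :
    0 ≤ (X * Y).trace := by
  classical
  obtain ⟨B, rfl⟩ := CStarAlgebra.nonneg_iff_eq_star_mul_self.1 hX
  rw [mul_assoc, trace_mul_comm]
  exact (hY.posSemidef.mul_mul_conjTranspose_same B).trace_nonneg

theorem trace_mul_le_trace_mul {X Y Z : Matrix V V ℝ} (hX : 0 ≤ X) (hYZ : Y ≤ Z) :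
    (X * Y).trace ≤ (X * Z).trace := by
  rw [← sub_nonneg, ← trace_sub, ← mul_sub]
  exact trace_mul_nonneg_of_nonneg hX (sub_nonneg.2 hYZ)

theorem posDef_sq [DecidableEq V] {P : Matrix V V ℝ} (hP : P.PosDef) : (P ^ 2).PosDef := by
  have h := PosDef.mul_conjTranspose_self P (vecMul_injective_of_isUnit hP.isUnit)
  rwa [hP.isHermitian.eq, ← sq] at h

variable [DecidableEq V]

theorem sq_dotProduct_le_of_posDef {P : Matrix V V ℝ} (hP : P.PosDef) (v w : V → ℝ) :
    (v ⬝ᵥ w) ^ 2 ≤ (v ⬝ᵥ P⁻¹ *ᵥ v) * (w ⬝ᵥ P *ᵥ w) := by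
  have hinv : P *ᵥ (P⁻¹ *ᵥ v) = v := by
    rw [mulVec_mulVec, mul_nonsing_inv _ ((isUnit_iff_isUnit_det _).1 hP.isUnit), one_mulVec]
  have hsymm : LinearMap.IsSymm (toBilin' P) := LinearMap.BilinForm.isSymm_iff.1
    (isSymm_toBilin'_iff_isSymm.2 (isHermitian_iff_isSymm.1 hP.isHermitian))
  have h := (toBilin' P).apply_sq_le_of_symm
    (fun z => by simpa [toBilin'_apply'] using hP.posSemidef.dotProduct_mulVec_nonneg z)
    hsymm w (P⁻¹ *ᵥ v)
  simp only [toBilin'_apply', hinv] at h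
  rwa [dotProduct_comm w v, dotProduct_comm (P⁻¹ *ᵥ v), mul_comm] at h

theorem posDef_sub_smul_vecMulVec {P : Matrix V V ℝ} (hP : P.PosDef) {v : V → ℝ} {c : ℝ}
    (hc : 0 ≤ c) (hcv : c * (v ⬝ᵥ P⁻¹ *ᵥ v) < 1) : (P - c • vecMulVec v v).PosDef := by
  refine .of_dotProduct_mulVec_pos (hP.isHermitian.sub ?_) fun w hw => ?_
  · exact isHermitian_iff_isSymm.2 (by rw [IsSymm, transpose_smul, transpose_vecMulVec])
  have hw_pos : 0 < w ⬝ᵥ P *ᵥ w := by simpa using hP.dotProduct_mulVec_pos hw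
  have hform : star w ⬝ᵥ (P - c • vecMulVec v v) *ᵥ w = w ⬝ᵥ P *ᵥ w - c * (v ⬝ᵥ w) ^ 2 := by
    simp only [star_trivial, sub_mulVec, smul_mulVec, vecMulVec_mulVec, dotProduct_sub,
      dotProduct_smul, dotProduct_comm w v, op_smul_eq_smul, smul_eq_mul, sq]
  rw [hform, sub_pos]
  calc c * (v ⬝ᵥ w) ^ 2 ≤ c * ((v ⬝ᵥ P⁻¹ *ᵥ v) * (w ⬝ᵥ P *ᵥ w)) := by
        gcongr; exact sq_dotProduct_le_of_posDef hP v w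
    _ = c * (v ⬝ᵥ P⁻¹ *ᵥ v) * (w ⬝ᵥ P *ᵥ w) := by ring
    _ < w ⬝ᵥ P *ᵥ w := mul_lt_of_lt_one_left hw_pos hcv

/-- The **Sherman–Morrison formula**. -/
theorem inv_sub_smul_vecMulVec {K : Type*} [Field K] {A : Matrix V V K} (hA : IsUnit A)
    {u v : V → K} {c : K} (h : c * (v ⬝ᵥ A⁻¹ *ᵥ u) ≠ 1) :
    (A - c • vecMulVec u v)⁻¹ =
      A⁻¹ + (c / (1 - c * (v ⬝ᵥ A⁻¹ *ᵥ u))) • vecMulVec (A⁻¹ *ᵥ u) (v ᵥ* A⁻¹) := by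
  have hdet := (isUnit_iff_isUnit_det _).1 hA
  have hden : 1 - c * (v ⬝ᵥ A⁻¹ *ᵥ u) ≠ 0 := sub_ne_zero.2 h.symm
  apply inv_eq_right_inv
  rw [sub_mul, mul_add, mul_add, mul_nonsing_inv _ hdet, mul_smul_comm, mul_vecMulVec,
    mulVec_mulVec, mul_nonsing_inv _ hdet, one_mulVec, smul_mul_assoc, vecMulVec_mul,
    smul_mul_smul_comm, vecMulVec_mul_vecMulVec, vecMulVec_smul, smul_smul]
  rw [add_sub_assoc, ← add_smul, ← sub_smul]
  convert add_zero _
  rw [← zero_smul K (vecMulVec u (v ᵥ* A⁻¹))]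
  congr 1
  field_simp
  ring

theorem trace_inv_sub_smul_vecMulVec {K : Type*} [Field K] {A : Matrix V V K} (hA : IsUnit A)
    {u v : V → K} {c : K} (h : c * (v ⬝ᵥ A⁻¹ *ᵥ u) ≠ 1) :
    (A - c • vecMulVec u v)⁻¹.trace =
      A⁻¹.trace + c * (v ⬝ᵥ A⁻¹ ^ 2 *ᵥ u) / (1 - c * (v ⬝ᵥ A⁻¹ *ᵥ u)) := by
  rw [inv_sub_smul_vecMulVec hA h, trace_add, trace_smul, trace_vecMulVec,
    dotProduct_comm (A⁻¹ *ᵥ u) (v ᵥ* A⁻¹), ← dotProduct_mulVec, mulVec_mulVec, ← sq, smul_eq_mul,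
    div_mul_eq_mul_div]

/-- The tangent-line inequality at `Q` for the convex function `X ↦ tr X⁻¹`. It is the expansion of
`0 ≤ tr ((P⁻¹ - Q⁻¹) P (P⁻¹ - Q⁻¹))`. -/
theorem trace_inv_add_trace_mul_sub_le {P Q : Matrix V V ℝ} (hP : P.PosDef) (hQ : Q.PosDef) :
    Q⁻¹.trace + (Q⁻¹ ^ 2 * (Q - P)).trace ≤ P⁻¹.trace := by
  have hdetP := (isUnit_iff_isUnit_det _).1 hP.isUnit
  have hdetQ := (isUnit_iff_isUnit_det _).1 hQ.isUnit
  have hnonneg := (hP.posSemidef.mul_mul_conjTranspose_same (P⁻¹ - Q⁻¹)).trace_nonneg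
  have hexpand : (P⁻¹ - Q⁻¹) * P * (P⁻¹ - Q⁻¹)ᴴ = P⁻¹ - Q⁻¹ - (Q⁻¹ - Q⁻¹ * P * Q⁻¹) := by
    rw [conjTranspose_sub, hP.inv.isHermitian.eq, hQ.inv.isHermitian.eq, sub_mul,
      nonsing_inv_mul _ hdetP, sub_mul, one_mul, mul_sub, mul_assoc Q⁻¹ P P⁻¹,
      mul_nonsing_inv _ hdetP, mul_one]
  have hcycle : (Q⁻¹ ^ 2 * (Q - P)).trace = (Q⁻¹ - Q⁻¹ * P * Q⁻¹).trace := by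
    rw [sq, mul_sub, mul_assoc, nonsing_inv_mul _ hdetQ, mul_one, trace_sub, trace_sub,
      mul_assoc Q⁻¹ Q⁻¹ P, trace_mul_comm Q⁻¹ (Q⁻¹ * P)]
  rw [hexpand, trace_sub, trace_sub P⁻¹, ← hcycle] at hnonneg
  linarith

end InverseTrace

section OuterProducts

variable {ι V : Type*}

/-- The sum `∑ v_e v_eᵀ` of the rank-one matrices of the vectors `v_e`, `e ∈ S`. -/
def outerSum (v : ι → V → ℝ) (S : Finset ι) : Matrix V V ℝ :=
  ∑ e ∈ S, vecMulVec (v e) (v e)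

/-- The average of the rank-one matrices `v_e v_eᵀ` over `e ∈ S`; it is `0` when `S` is empty. -/
noncomputable def outerMean (v : ι → V → ℝ) (S : Finset ι) : Matrix V V ℝ :=
  (#S : ℝ)⁻¹ • outerSum v S

theorem outerSum_nonneg [Finite V] (v : ι → V → ℝ) (S : Finset ι) : 0 ≤ outerSum v S := by
  cases nonempty_fintype V
  exact sum_nonneg fun e _ => by simpa using (posSemidef_vecMulVec_self_star (v e)).nonneg

theorem outerSum_mono [Finite V] (v : ι → V → ℝ) {S T : Finset ι} (hST : S ⊆ T) :
    outerSum v S ≤ outerSum v T := by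
  cases nonempty_fintype V
  exact sum_le_sum_of_subset_of_nonneg hST fun e _ _ => by
    simpa using (posSemidef_vecMulVec_self_star (v e)).nonneg

theorem outerMean_nonneg [Finite V] (v : ι → V → ℝ) (S : Finset ι) : 0 ≤ outerMean v S := by
  cases nonempty_fintype V
  exact smul_nonneg (by positivity) (outerSum_nonneg v S)

theorem outerMean_erase [DecidableEq ι] (v : ι → V → ℝ) {S : Finset ι} (hS : 1 < #S) {e : ι}
    (he : e ∈ S) :
    outerMean v (S.erase e) =
      outerMean v S + ((#S : ℝ) - 1)⁻¹ • (outerMean v S - vecMulVec (v e) (v e)) := by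
  have hsum : outerSum v (S.erase e) = outerSum v S - vecMulVec (v e) (v e) :=
    eq_sub_of_add_eq' (add_sum_erase S (fun e => vecMulVec (v e) (v e)) he)
  have hS' : (1 : ℝ) < #S := by exact_mod_cast hS
  have hpos : (#S : ℝ) - 1 ≠ 0 := (sub_pos.2 hS').ne'
  have hcoef : ((#S : ℝ) - 1)⁻¹ = (#S : ℝ)⁻¹ + ((#S : ℝ) - 1)⁻¹ * (#S : ℝ)⁻¹ := by
    field_simp; ring
  rw [outerMean, outerMean, hsum, card_erase_of_mem he, Nat.cast_pred (by omega), smul_sub,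
    smul_sub]
  nth_rewrite 1 [hcoef]
  module

theorem sum_dotProduct_mulVec [Fintype V] (v : ι → V → ℝ) (S : Finset ι) (A : Matrix V V ℝ) :
    ∑ e ∈ S, v e ⬝ᵥ A *ᵥ v e = #S * (A * outerMean v S).trace := by
  rcases S.eq_empty_or_nonempty with rfl | hS
  · simp
  have hS : (#S : ℝ) ≠ 0 := by exact_mod_cast hS.card_ne_zero
  rw [outerMean, mul_smul_comm, trace_smul, smul_eq_mul, mul_inv_cancel_left₀ hS, outerSum,
    mul_sum, trace_sum]
  simp only [mul_vecMulVec, trace_vecMulVec, dotProduct_comm]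

end OuterProducts

section Barrier

variable {ι κ V : Type*} [DecidableEq V]

/-- The barrier matrix of level `u`: it is positive definite exactly when the average of `v_e v_eᵀ`
over all `e` exceeds the average over `S` by less than `u`. -/
noncomputable def barrierMatrix [Fintype ι] (v : ι → V → ℝ) (u : ℝ) (S : Finset ι) :
    Matrix V V ℝ :=
  u • 1 - (outerMean v univ - outerMean v S)

theorem barrierMatrix_erase [Fintype ι] [DecidableEq ι] (v : ι → V → ℝ) (u δ : ℝ) {S : Finset ι}
    (hS : 1 < #S) {e : ι} (he : e ∈ S) :
    barrierMatrix v (u + δ) (S.erase e) =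
      barrierMatrix v u S + (δ • 1 + ((#S : ℝ) - 1)⁻¹ • outerMean v S) -
        ((#S : ℝ) - 1)⁻¹ • vecMulVec (v e) (v e) := by
  rw [barrierMatrix, barrierMatrix, outerMean_erase v hS he]
  module

theorem smul_outerSum_compl_sub_le [Fintype ι] [DecidableEq ι] [Finite V] {v : ι → V → ℝ}
    {S : Finset ι} {u : ℝ} (hu : 0 ≤ u) (hS : S.Nonempty) (hSc : Sᶜ.Nonempty)
    (h : 0 ≤ barrierMatrix v u S) :
    ((Fintype.card ι : ℝ) / #Sᶜ) • outerSum v Sᶜ - outerSum v univ ≤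
      ((Fintype.card ι : ℝ) ^ 2 / #Sᶜ * u) • 1 := by
  cases nonempty_fintype V
  have hm : (#S : ℝ) + #Sᶜ = Fintype.card ι := by exact_mod_cast card_add_card_compl S
  set m : ℝ := (Fintype.card ι : ℝ)
  have hs : (0 : ℝ) < #S := by exact_mod_cast hS.card_pos
  have hk : (0 : ℝ) < #Sᶜ := by exact_mod_cast hSc.card_pos
  have hm_pos : 0 < m := by linarith
  have hsum : outerSum v S = outerSum v univ - outerSum v Sᶜ :=
    eq_sub_of_add_eq (sum_add_sum_compl S _)
  have hle : outerMean v univ - outerMean v S ≤ u • 1 := sub_nonneg.1 h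
  calc (m / #Sᶜ) • outerSum v Sᶜ - outerSum v univ
      = (m * #S / #Sᶜ) • (outerMean v univ - outerMean v S) := by
        have hcoef : m / #Sᶜ - 1 = #S / #Sᶜ := by field_simp; linarith
        have h₁ : m * #S / #Sᶜ * m⁻¹ = m / #Sᶜ - 1 := by rw [hcoef]; field_simp
        have h₂ : m * #S / #Sᶜ * (#S : ℝ)⁻¹ = m / #Sᶜ := by field_simp
        rw [outerMean, outerMean, card_univ, smul_sub, smul_smul, smul_smul, h₁, h₂, hsum]
        module
    _ ≤ (m * #S / #Sᶜ) • u • 1 := by gcongr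
    _ = (m * #S / #Sᶜ * u) • 1 := smul_smul _ _ _
    _ ≤ (m ^ 2 / #Sᶜ * u) • 1 := by
        refine smul_le_smul_of_nonneg_right ?_ zero_le_one
        have : (#S : ℝ) ≤ m := by linarith
        rw [sq]
        gcongr

variable [Fintype κ] [Fintype V]

/-- The barrier potential `∑ⱼ tr Pⱼ⁻¹` of a family of positive definite matrices. -/
noncomputable def barrierPotential (P : κ → Matrix V V ℝ) : ℝ :=
  ∑ j, (P j)⁻¹.trace

theorem barrierPotential_nonneg {P : κ → Matrix V V ℝ} (hP : ∀ j, (P j).PosDef) :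
    0 ≤ barrierPotential P :=
  sum_nonneg fun j _ => (hP j).inv.posSemidef.trace_nonneg

theorem barrierPotential_sub_smul_vecMulVec_le {P : κ → Matrix V V ℝ} (hP : ∀ j, (P j).PosDef)
    {w : κ → V → ℝ} {c : ℝ} (hc : 0 ≤ c) (hcw : c * ∑ j, w j ⬝ᵥ (P j)⁻¹ *ᵥ w j < 1) :
    (∀ j, (P j - c • vecMulVec (w j) (w j)).PosDef) ∧
      barrierPotential (fun j => P j - c • vecMulVec (w j) (w j)) ≤
        barrierPotential P + c * (∑ j, w j ⬝ᵥ (P j)⁻¹ ^ 2 *ᵥ w j) /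
          (1 - c * ∑ j, w j ⬝ᵥ (P j)⁻¹ *ᵥ w j) := by
  set x : ℝ := c * ∑ j, w j ⬝ᵥ (P j)⁻¹ *ᵥ w j
  have hle_x (j) : c * (w j ⬝ᵥ (P j)⁻¹ *ᵥ w j) ≤ x := by
    refine mul_le_mul_of_nonneg_left ?_ hc
    exact single_le_sum (f := fun i => w i ⬝ᵥ (P i)⁻¹ *ᵥ w i) (fun i _ => by
      simpa using (hP i).inv.posSemidef.dotProduct_mulVec_nonneg (w i)) (mem_univ j)
  have hlt (j) : c * (w j ⬝ᵥ (P j)⁻¹ *ᵥ w j) < 1 := (hle_x j).trans_lt hcw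
  refine ⟨fun j => posDef_sub_smul_vecMulVec (hP j) hc (hlt j), ?_⟩
  rw [barrierPotential, barrierPotential, mul_sum, sum_div, ← sum_add_distrib]
  refine sum_le_sum fun j _ => ?_
  rw [trace_inv_sub_smul_vecMulVec (hP j).isUnit (hlt j).ne]
  have hnonneg : 0 ≤ w j ⬝ᵥ (P j)⁻¹ ^ 2 *ᵥ w j := by
    simpa using (posDef_sq (hP j).inv).posSemidef.dotProduct_mulVec_nonneg (w j)
  have := sub_pos.2 hcw
  gcongr
  exact hle_x j

theorem exists_mem_barrierPotential_sub_smul_vecMulVec_le {P : κ → Matrix V V ℝ}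
    (hP : ∀ j, (P j).PosDef) (v : κ → ι → V → ℝ) {S : Finset ι} (hS : S.Nonempty) {c D : ℝ}
    (hc : 0 ≤ c) (hD : 0 < D)
    (havg : c * ∑ j, ((P j)⁻¹ ^ 2 * outerMean (v j) S).trace <
      D * (1 - c * ∑ j, ((P j)⁻¹ * outerMean (v j) S).trace)) :
    ∃ e ∈ S, (∀ j, (P j - c • vecMulVec (v j e) (v j e)).PosDef) ∧
      barrierPotential (fun j => P j - c • vecMulVec (v j e) (v j e)) ≤ barrierPotential P + D := by
  have hsum (A : κ → Matrix V V ℝ) : ∑ e ∈ S, c * ∑ j, v j e ⬝ᵥ A j *ᵥ v j e =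
      #S * (c * ∑ j, (A j * outerMean (v j) S).trace) := by
    rw [← mul_sum, sum_comm]
    simp only [sum_dotProduct_mulVec, ← mul_sum]
    ring
  have hcard : (0 : ℝ) < #S := by exact_mod_cast hS.card_pos
  obtain ⟨e, he, hlt⟩ : ∃ e ∈ S, c * ∑ j, v j e ⬝ᵥ (P j)⁻¹ ^ 2 *ᵥ v j e <
      D * (1 - c * ∑ j, v j e ⬝ᵥ (P j)⁻¹ *ᵥ v j e) := by
    refine exists_lt_of_sum_lt ?_
    rw [hsum, ← mul_sum, sum_sub_distrib, hsum, sum_const, nsmul_one, ← mul_one_sub,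
      mul_left_comm D]
    exact mul_lt_mul_of_pos_left havg hcard
  have hnonneg : 0 ≤ c * ∑ j, v j e ⬝ᵥ (P j)⁻¹ ^ 2 *ᵥ v j e :=
    mul_nonneg hc <| sum_nonneg fun j _ => by
      simpa using (posDef_sq (hP j).inv).posSemidef.dotProduct_mulVec_nonneg (v j e)
  have hpos : 0 < 1 - c * ∑ j, v j e ⬝ᵥ (P j)⁻¹ *ᵥ v j e :=
    pos_of_mul_pos_right (hnonneg.trans_lt hlt) hD.le
  obtain ⟨hposDef, hpot⟩ :=
    barrierPotential_sub_smul_vecMulVec_le hP (w := fun j => v j e) hc (sub_pos.1 hpos)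
  refine ⟨e, he, hposDef, hpot.trans ?_⟩
  gcongr
  exact (div_le_iff₀ hpos).2 hlt.le

theorem barrierPotential_add_add_le {P N : κ → Matrix V V ℝ} (hP : ∀ j, (P j).PosDef)
    (hN : ∀ j, 0 ≤ N j) :
    barrierPotential (P + N) + ∑ j, (((P + N) j)⁻¹ ^ 2 * N j).trace ≤ barrierPotential P := by
  rw [barrierPotential, barrierPotential, ← sum_add_distrib]
  refine sum_le_sum fun j _ => ?_
  simpa using trace_inv_add_trace_mul_sub_le (hP j) ((hP j).add_posSemidef (hN j).posSemidef)

theorem sum_trace_inv_sq_mul_pos [Nonempty κ] [Nonempty V] {Q R : κ → Matrix V V ℝ}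
    (hQ : ∀ j, (Q j).PosDef) (hR : ∀ j, 0 ≤ R j) {c δ : ℝ} (hc : 0 ≤ c) (hδ : 0 < δ) :
    0 < ∑ j, ((Q j)⁻¹ ^ 2 * (δ • 1 + c • R j)).trace := by
  refine sum_pos (fun j _ => ?_) univ_nonempty
  have hsq := posDef_sq (hQ j).inv
  have hpos : 0 < ((Q j)⁻¹ ^ 2).trace := hsq.trace_pos
  have hnonneg := trace_mul_nonneg_of_nonneg hsq.posSemidef.nonneg (hR j)
  simp only [mul_add, trace_add, mul_smul_comm, mul_one, trace_smul, smul_eq_mul]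
  positivity

/-- The hypothesis on averages in `exists_mem_barrierPotential_sub_smul_vecMulVec_le`. -/
theorem sum_trace_inv_sq_mul_lt [Nonempty κ] [Nonempty V] {Q R : κ → Matrix V V ℝ}
    (hQ : ∀ j, (Q j).PosDef) (hR : ∀ j, 0 ≤ R j) {c ρ δ θ : ℝ} (hRρ : ∀ j, R j ≤ ρ • 1)
    (hc : 0 ≤ c) (hδ : 0 < δ) (hθ_nonneg : 0 ≤ θ) (hθ_lt : θ < 1 / 2)
    (hθ : c * ρ * barrierPotential Q ≤ θ) (hδθ : 2 * θ * (c * ρ) ≤ δ) :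
    c * ∑ j, ((Q j)⁻¹ ^ 2 * R j).trace <
      (∑ j, ((Q j)⁻¹ ^ 2 * (δ • 1 + c • R j)).trace) *
        (1 - c * ∑ j, ((Q j)⁻¹ * R j).trace) := by
  have hsq (j) := posDef_sq (hQ j).inv
  have hdrop_pos := sum_trace_inv_sq_mul_pos hQ hR hc hδ
  have hsplit : ∑ j, ((Q j)⁻¹ ^ 2 * (δ • 1 + c • R j)).trace =
      δ * ∑ j, ((Q j)⁻¹ ^ 2).trace + c * ∑ j, ((Q j)⁻¹ ^ 2 * R j).trace := by
    simp only [mul_add, trace_add, sum_add_distrib, mul_smul_comm, mul_one, trace_smul,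
      smul_eq_mul, mul_sum]
  rw [hsplit] at hdrop_pos ⊢
  set a := ∑ j, ((Q j)⁻¹ ^ 2).trace
  set t := ∑ j, ((Q j)⁻¹ ^ 2 * R j).trace
  set s := ∑ j, ((Q j)⁻¹ * R j).trace
  have ha : 0 < a := sum_pos (fun j _ => (hsq j).trace_pos) univ_nonempty
  have ht : t ≤ ρ * a := by
    rw [mul_sum]
    exact sum_le_sum fun j _ => by
      simpa using trace_mul_le_trace_mul (hsq j).posSemidef.nonneg (hRρ j)
  have hs : s ≤ ρ * barrierPotential Q := by
    rw [barrierPotential, mul_sum]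
    exact sum_le_sum fun j _ => by
      simpa using trace_mul_le_trace_mul (hQ j).inv.posSemidef.nonneg (hRρ j)
  have hcs : c * s ≤ θ := calc
    c * s ≤ c * (ρ * barrierPotential Q) := by gcongr
    _ ≤ θ := by rwa [← mul_assoc]
  have hθt : 2 * (θ * (c * t)) ≤ δ * a := calc
    2 * (θ * (c * t)) ≤ 2 * (θ * (c * (ρ * a))) := by gcongr
    _ = 2 * θ * (c * ρ) * a := by ring
    _ ≤ δ * a := by gcongr
  have hθa : θ * (δ * a) < 1 / 2 * (δ * a) := by gcongr
  calc c * t < (δ * a + c * t) * (1 - θ) := by linarith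
    _ ≤ (δ * a + c * t) * (1 - c * s) := by gcongr

/-- One step of the barrier argument: the barrier is raised by `δ`, and the average over `S` is
replaced by the average over `S \ {e}`, for which `c = 1 / (#S - 1)`. -/
theorem exists_mem_barrierPotential_add_sub_le [Nonempty κ] [Nonempty V] {P : κ → Matrix V V ℝ}
    (hP : ∀ j, (P j).PosDef) (v : κ → ι → V → ℝ) {S : Finset ι} (hS : S.Nonempty)
    {c ρ δ θ : ℝ} (hc : 0 ≤ c) (hρ : 0 ≤ ρ) (hmean : ∀ j, outerMean (v j) S ≤ ρ • 1)
    (hδ : 0 < δ) (hθ : c * ρ * barrierPotential P ≤ θ) (hθ_lt : θ < 1 / 2)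
    (hδθ : 2 * θ * (c * ρ) ≤ δ) :
    ∃ e ∈ S,
      (∀ j, (P j + (δ • 1 + c • outerMean (v j) S) - c • vecMulVec (v j e) (v j e)).PosDef) ∧
      barrierPotential
          (fun j => P j + (δ • 1 + c • outerMean (v j) S) - c • vecMulVec (v j e) (v j e)) ≤
        barrierPotential P := by
  have hR (j) : 0 ≤ outerMean (v j) S := outerMean_nonneg (v j) S
  set N : κ → Matrix V V ℝ := fun j => δ • 1 + c • outerMean (v j) S
  have hN (j) : 0 ≤ N j := add_nonneg (smul_nonneg hδ.le zero_le_one) (smul_nonneg hc (hR j))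
  have hQ (j) : ((P + N) j).PosDef := (hP j).add_posSemidef (hN j).posSemidef
  have hdrop := barrierPotential_add_add_le hP hN
  have hdrop_pos := sum_trace_inv_sq_mul_pos hQ hR hc hδ
  have hθ_nonneg : 0 ≤ θ := hθ.trans' (mul_nonneg (by positivity) (barrierPotential_nonneg hP))
  have hθQ : c * ρ * barrierPotential (P + N) ≤ θ :=
    hθ.trans' (by gcongr; exact le_of_add_le_of_nonneg_left hdrop hdrop_pos.le)
  obtain ⟨e, he, hposDef, hpot⟩ := exists_mem_barrierPotential_sub_smul_vecMulVec_le hQ v hS hc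
    hdrop_pos (sum_trace_inv_sq_mul_lt hQ hR hmean hc hδ hθ_nonneg hθ_lt hθQ hδθ)
  exact ⟨e, he, hposDef, hpot.trans hdrop⟩

theorem barrierPotential_barrierMatrix_univ [Fintype ι] (v : κ → ι → V → ℝ) {u : ℝ}
    (hu : u ≠ 0) :
    barrierPotential (fun j => barrierMatrix (v j) u univ) =
      Fintype.card κ * (Fintype.card V / u) := by
  have hinv : (u • (1 : Matrix V V ℝ))⁻¹ = u⁻¹ • 1 :=
    inv_eq_right_inv (by rw [smul_mul_smul_comm, mul_one, mul_inv_cancel₀ hu, one_smul])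
  simp only [barrierPotential, barrierMatrix, sub_self, sub_zero, hinv, trace_smul, trace_one,
    smul_eq_mul, sum_const, card_univ, nsmul_eq_mul, inv_mul_eq_div]

end Barrier

section Selection

variable {ι κ V : Type*} [Fintype ι] [Fintype κ] [Nonempty κ] [Fintype V] [DecidableEq V]
  [Nonempty V] (v : κ → ι → V → ℝ) {ℓ : ℝ}

/-- With `m = |ι|`, the quantity `4 ℓ / m²` is the product of the bounds `2 / m` for `1 / (#S - 1)`
and `2 ℓ / m` for the average over `S`. -/
theorem exists_mem_barrierMatrix_erase [DecidableEq ι] (hℓ : 0 ≤ ℓ)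
    (hv : ∀ j, outerSum (v j) univ ≤ ℓ • 1) {S : Finset ι} (hS : Fintype.card ι + 2 ≤ 2 * #S)
    {u δ θ : ℝ} (hpos : ∀ j, (barrierMatrix (v j) u S).PosDef)
    (hθ : 4 * ℓ / (Fintype.card ι : ℝ) ^ 2 *
      barrierPotential (fun j => barrierMatrix (v j) u S) ≤ θ)
    (hθ_lt : θ < 1 / 2) (hδ : 0 < δ) (hδθ : 2 * θ * (4 * ℓ / (Fintype.card ι : ℝ) ^ 2) ≤ δ) :
    ∃ e ∈ S, (∀ j, (barrierMatrix (v j) (u + δ) (S.erase e)).PosDef) ∧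
      barrierPotential (fun j => barrierMatrix (v j) (u + δ) (S.erase e)) ≤
        barrierPotential (fun j => barrierMatrix (v j) u S) := by
  have hS_one : 1 < #S := by have := S.card_le_univ; omega
  have hcard_pos : 0 < #S := by omega
  have hS_nonempty : S.Nonempty := card_pos.1 hcard_pos
  have hι : (0 : ℝ) < Fintype.card ι := by
    exact_mod_cast hcard_pos.trans_le (card_le_univ S)
  have hS_cast : (Fintype.card ι : ℝ) + 2 ≤ 2 * #S := by exact_mod_cast hS
  set m : ℝ := (Fintype.card ι : ℝ)
  have hS' : m / 2 ≤ (#S : ℝ) - 1 := by linarith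
  have hc_nonneg : 0 ≤ ((#S : ℝ) - 1)⁻¹ := inv_nonneg.2 (hS'.trans' (by positivity))
  have hc : ((#S : ℝ) - 1)⁻¹ ≤ 2 / m := by
    rw [← inv_div]; gcongr
  have hinv : (#S : ℝ)⁻¹ ≤ 2 / m := by
    rw [← inv_div]; gcongr; linarith
  have hmean (j) : outerMean (v j) S ≤ (2 / m * ℓ) • 1 := calc
    outerMean (v j) S ≤ (#S : ℝ)⁻¹ • ℓ • 1 :=
      smul_le_smul_of_nonneg_left ((outerSum_mono _ S.subset_univ).trans (hv j)) (by positivity)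
    _ = ((#S : ℝ)⁻¹ * ℓ) • 1 := smul_smul _ _ _
    _ ≤ (2 / m * ℓ) • 1 := smul_le_smul_of_nonneg_right (by gcongr) zero_le_one
  have hcρ : ((#S : ℝ) - 1)⁻¹ * (2 / m * ℓ) ≤ 4 * ℓ / m ^ 2 := calc
    ((#S : ℝ) - 1)⁻¹ * (2 / m * ℓ) ≤ 2 / m * (2 / m * ℓ) := by gcongr
    _ = 4 * ℓ / m ^ 2 := by ring
  have hpot := barrierPotential_nonneg hpos
  have hθ_nonneg : 0 ≤ θ := hθ.trans' (by positivity)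
  obtain ⟨e, he, hstep⟩ := exists_mem_barrierPotential_add_sub_le hpos v hS_nonempty
    hc_nonneg (by positivity) hmean hδ (hθ.trans' (by gcongr)) hθ_lt
    (hδθ.trans' (by gcongr))
  refine ⟨e, he, ?_⟩
  simpa only [barrierMatrix_erase _ _ _ hS_one he] using hstep

theorem exists_card_add_eq_posDef_barrierMatrix (hℓ : 0 ≤ ℓ)
    (hv : ∀ j, outerSum (v j) univ ≤ ℓ • 1) {u δ θ : ℝ} (hu : 0 < u) (hδ : 0 < δ)
    (hθ : 4 * ℓ / (Fintype.card ι : ℝ) ^ 2 * (Fintype.card κ * (Fintype.card V / u)) ≤ θ)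
    (hθ_lt : θ < 1 / 2) (hδθ : 2 * θ * (4 * ℓ / (Fintype.card ι : ℝ) ^ 2) ≤ δ) {t : ℕ}
    (ht : 2 * t ≤ Fintype.card ι) :
    ∃ S : Finset ι, #S + t = Fintype.card ι ∧
      (∀ j, (barrierMatrix (v j) (u + t * δ) S).PosDef) ∧
      barrierPotential (fun j => barrierMatrix (v j) (u + t * δ) S) ≤
        Fintype.card κ * (Fintype.card V / u) := by
  classical
  induction t with
  | zero =>
    refine ⟨univ, by simp, fun j => ?_, ?_⟩
    · simpa [barrierMatrix] using PosDef.one.smul hu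
    · simp [barrierPotential_barrierMatrix_univ v hu.ne']
  | succ t ih =>
    obtain ⟨S, hcard, hpos, hpot⟩ := ih (by omega)
    obtain ⟨e, he, hpos', hpot'⟩ := exists_mem_barrierMatrix_erase v hℓ hv (by omega) hpos
      (hθ.trans' (by gcongr)) hθ_lt hδ hδθ
    have hu_succ : u + (t + 1 : ℕ) * δ = u + t * δ + δ := by push_cast; ring
    refine ⟨S.erase e, ?_, ?_⟩
    · have := card_erase_add_one he
      omega
    · rw [hu_succ]
      exact ⟨hpos', hpot'.trans hpot⟩

theorem exists_card_eq_smul_outerSum_sub_le {ε : ℝ} (hℓ : 0 < ℓ)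
    (hv : ∀ j, outerSum (v j) univ ≤ ℓ • 1) (hε : 0 < ε) (hε_lt : ε < 1) {k : ℕ}
    (hk : 2 * k ≤ Fintype.card ι) (hV : (Fintype.card V : ℝ) ≤ ε ^ 2 * k) :
    ∃ F : Finset ι, #F = k ∧ ∀ j,
      ((Fintype.card ι : ℝ) / #F) • outerSum (v j) F - outerSum (v j) univ ≤
        ((8 * Fintype.card κ + 4) * ε * ℓ) • 1 := by
  classical
  have hk_pos : (0 : ℝ) < k :=
    pos_of_mul_pos_right (hV.trans_lt' (by exact_mod_cast Fintype.card_pos)) (by positivity)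
  have hk_pos' : 0 < k := by exact_mod_cast hk_pos
  have hm : (0 : ℝ) < Fintype.card ι := by exact_mod_cast (by omega : 0 < Fintype.card ι)
  have hκ : (0 : ℝ) < Fintype.card κ := by exact_mod_cast Fintype.card_pos
  set m : ℝ := (Fintype.card ι : ℝ) with hm_def
  set q : ℝ := (Fintype.card κ : ℝ)
  set u : ℝ := 8 * q * ε * ℓ * k / m ^ 2 with hu
  set δ : ℝ := 4 * ε * ℓ / m ^ 2 with hδ
  have hu_pos : 0 < u := by positivity
  have hθ : 4 * ℓ / m ^ 2 * (q * (Fintype.card V / u)) ≤ ε / 2 := calc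
    4 * ℓ / m ^ 2 * (q * (Fintype.card V / u)) ≤ 4 * ℓ / m ^ 2 * (q * (ε ^ 2 * k / u)) := by
      gcongr
    _ = ε / 2 := by rw [hu]; field_simp; norm_num
  obtain ⟨S, hcard, hpos, -⟩ := exists_card_add_eq_posDef_barrierMatrix v hℓ.le hv hu_pos
    (by positivity : 0 < δ) hθ (by linarith) (by rw [← hm_def, hδ]; apply le_of_eq; ring) hk
  have hcompl : #Sᶜ = k := by rw [card_compl]; omega
  refine ⟨Sᶜ, hcompl, fun j => ?_⟩
  have h := smul_outerSum_compl_sub_le (by positivity) (card_pos.1 (by omega))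
    (card_pos.1 (by omega)) (hpos j).posSemidef.nonneg
  convert h using 2
  rw [← hm_def, hcompl, hu, hδ]
  field_simp

end Selection

section EdgeLists

variable {ι V : Type*} [DecidableEq V]

/-- The vector `χ_u - χ_v` of the edge `e = uv` in an edge list `E`. -/
def edgeVec (E : ι → V × V) (e : ι) : V → ℝ :=
  Pi.single (E e).1 1 - Pi.single (E e).2 1

/-- The vector `χ_u + χ_v` of the edge `e = uv` in an edge list `E`. -/
def signlessEdgeVec (E : ι → V × V) (e : ι) : V → ℝ :=
  Pi.single (E e).1 1 + Pi.single (E e).2 1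

/-- The Laplacian of the multigraph formed by the edges of `E` with index in `F`. -/
def edgeLaplacian (E : ι → V × V) (F : Finset ι) : Matrix V V ℝ :=
  outerSum (edgeVec E) F

/-- The signless Laplacian (degree matrix plus adjacency matrix) of the multigraph formed by the
edges of `E` with index in `F`. -/
def edgeSignlessLaplacian (E : ι → V × V) (F : Finset ι) : Matrix V V ℝ :=
  outerSum (signlessEdgeVec E) F

/-- The degree of `v` in the multigraph formed by the edges of `E` with index in `F`; a loop at `v`
counts twice. -/
def edgeDegree (E : ι → V × V) (F : Finset ι) (v : V) : ℕ :=
  #{e ∈ F | (E e).1 = v} + #{e ∈ F | (E e).2 = v}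

/-- The diagonal matrix of the degrees `edgeDegree E F v`. -/
def edgeDegreeMatrix (E : ι → V × V) (F : Finset ι) : Matrix V V ℝ :=
  diagonal fun v => (edgeDegree E F v : ℝ)

theorem edgeDegree_of_forall_ne {E : ι → V × V} (hE : ∀ e, (E e).1 ≠ (E e).2) (F : Finset ι)
    (v : V) : edgeDegree E F v = #{e ∈ F | (E e).1 = v ∨ (E e).2 = v} := by
  classical
  rw [filter_or, card_union_of_disjoint, edgeDegree]
  exact disjoint_filter.2 fun e _ h₁ h₂ => hE e (h₁.trans h₂.symm)

theorem edgeDegreeMatrix_eq_sum (E : ι → V × V) (F : Finset ι) :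
    edgeDegreeMatrix E F =
      ∑ e ∈ F, (diagonal (Pi.single (E e).1 1) + diagonal (Pi.single (E e).2 1)) := by
  ext v w
  rcases eq_or_ne v w with rfl | hvw
  · simp [edgeDegreeMatrix, edgeDegree, Matrix.sum_apply, sum_add_distrib, Pi.single_apply,
      eq_comm]
  · simp [edgeDegreeMatrix, Matrix.sum_apply, hvw]

theorem edgeLaplacian_add_edgeSignlessLaplacian (E : ι → V × V) (F : Finset ι) :
    edgeLaplacian E F + edgeSignlessLaplacian E F = (2 : ℝ) • edgeDegreeMatrix E F := by
  rw [edgeLaplacian, edgeSignlessLaplacian, outerSum, outerSum, ← sum_add_distrib,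
    edgeDegreeMatrix_eq_sum, smul_sum]
  refine sum_congr rfl fun e _ => ?_
  rw [edgeVec, signlessEdgeVec, diagonal_single, diagonal_single,
    single_eq_single_vecMulVec_single, single_eq_single_vecMulVec_single]
  simp only [vecMulVec_add, vecMulVec_sub, add_vecMulVec, sub_vecMulVec]
  module

theorem edgeDegreeMatrix_le {E : ι → V × V} {F : Finset ι} {d : ℝ}
    (hd : ∀ v, (edgeDegree E F v : ℝ) ≤ d) : edgeDegreeMatrix E F ≤ d • 1 := by
  rw [le_iff, smul_one_eq_diagonal, edgeDegreeMatrix, diagonal_sub]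
  exact .diagonal fun v => sub_nonneg.2 (hd v)

theorem edgeLaplacian_add_edgeSignlessLaplacian_le [Finite V] {E : ι → V × V} {F : Finset ι}
    {d : ℝ} (hd : ∀ v, (edgeDegree E F v : ℝ) ≤ d) :
    edgeLaplacian E F + edgeSignlessLaplacian E F ≤ (2 * d) • 1 := by
  cases nonempty_fintype V
  rw [edgeLaplacian_add_edgeSignlessLaplacian, mul_smul]
  exact smul_le_smul_of_nonneg_left (edgeDegreeMatrix_le hd) zero_le_two

theorem edgeLaplacian_le [Finite V] {E : ι → V × V} {F : Finset ι} {d : ℝ}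
    (hd : ∀ v, (edgeDegree E F v : ℝ) ≤ d) : edgeLaplacian E F ≤ (2 * d) • 1 :=
  (le_add_of_nonneg_right (outerSum_nonneg _ F)).trans
    (edgeLaplacian_add_edgeSignlessLaplacian_le hd)

theorem edgeSignlessLaplacian_le [Finite V] {E : ι → V × V} {F : Finset ι} {d : ℝ}
    (hd : ∀ v, (edgeDegree E F v : ℝ) ≤ d) : edgeSignlessLaplacian E F ≤ (2 * d) • 1 :=
  (le_add_of_nonneg_left (outerSum_nonneg _ F)).trans
    (edgeLaplacian_add_edgeSignlessLaplacian_le hd)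

theorem edgeDegree_fst_pos (E : ι → V × V) {F : Finset ι} {e : ι} (he : e ∈ F) :
    0 < edgeDegree E F (E e).1 := by
  have h : e ∈ ({e' ∈ F | (E e').1 = (E e).1} : Finset ι) := mem_filter.2 ⟨he, rfl⟩
  exact Nat.add_pos_left (card_pos.2 ⟨e, h⟩) _

theorem additive_unweighted_sparsifier_deterministic_general [Fintype ι] [Fintype V]
    (E : ι → V × V) {d ε : ℝ} (hd : ∀ v, (edgeDegree E univ v : ℝ) ≤ d) (hε : 0 < ε)
    (hε_lt : ε < 1) (hcard : 2 * ⌈(Fintype.card V : ℝ) / ε ^ 2⌉₊ ≤ Fintype.card ι) :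
    ∃ F : Finset ι, #F = ⌈(Fintype.card V : ℝ) / ε ^ 2⌉₊ ∧
      (2 * (Fintype.card ι : ℝ) / #F) • edgeDegreeMatrix E F -
          (2 : ℝ) • edgeDegreeMatrix E univ - (40 * ε * d) • 1 ≤
        ((Fintype.card ι : ℝ) / #F) • edgeLaplacian E F - edgeLaplacian E univ ∧
      ((Fintype.card ι : ℝ) / #F) • edgeLaplacian E F - edgeLaplacian E univ ≤
        (40 * ε * d) • 1 := by
  set k := ⌈(Fintype.card V : ℝ) / ε ^ 2⌉₊
  rcases isEmpty_or_nonempty V with hV | hV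
  · exact ⟨∅, by simp [k], (Subsingleton.elim _ _).le, (Subsingleton.elim _ _).le⟩
  have hk : (Fintype.card V : ℝ) ≤ ε ^ 2 * k := (div_le_iff₀' (by positivity)).1 (Nat.le_ceil _)
  have hk_pos : 0 < k := Nat.ceil_pos.2 (by positivity)
  obtain ⟨e⟩ : Nonempty ι := Fintype.card_pos_iff.1 (by omega)
  have hd_pos : 0 < d :=
    (hd (E e).1).trans_lt' (by exact_mod_cast edgeDegree_fst_pos E (mem_univ e))
  obtain ⟨F, hF, hle⟩ := exists_card_eq_smul_outerSum_sub_le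
    (fun i : Bool => if i then edgeVec E else signlessEdgeVec E) (by positivity : 0 < 2 * d)
    (Bool.forall_bool.2 ⟨edgeSignlessLaplacian_le hd, edgeLaplacian_le hd⟩) hε hε_lt hcard hk
  have hconst : (8 * Fintype.card Bool + 4) * ε * (2 * d) = 40 * ε * d := by
    rw [Fintype.card_bool]; push_cast; ring
  simp only [hconst] at hle
  refine ⟨F, hF, ?_, hle true⟩
  have hsignless (S : Finset ι) : edgeSignlessLaplacian E S =
      (2 : ℝ) • edgeDegreeMatrix E S - edgeLaplacian E S :=
    eq_sub_of_add_eq' (edgeLaplacian_add_edgeSignlessLaplacian E S)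
  have hlower : ((Fintype.card ι : ℝ) / #F) • edgeSignlessLaplacian E F -
      edgeSignlessLaplacian E univ ≤ (40 * ε * d) • 1 := hle false
  rw [hsignless, hsignless] at hlower
  refine sub_nonneg.1 ((sub_nonneg.2 hlower).trans_eq ?_)
  module

end EdgeLists

end

/-- **Deterministic additive unweighted spectral sparsification with no parallel edges.**
There is a universal constant `K > 0` such that for every simple graph `G` on `n` vertices
with `m` edges (edge list `E : Fin m → V × V`, distinct endpoints, pairwise distinct
unordered pairs), maximum degree `d`, and `ε ∈ (0, 1)` with `m ≥ 2⌈n/ε²⌉`, there exists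
a subset `F` of the edges with `|F| = ⌈n/ε²⌉` such that, writing `m̃ := |F|`,
`2 (m/m̃) D_{G̃} - 2 D_G - K ε d Iₙ ⪯ (m/m̃) L_{G̃} - L_G ⪯ K ε d Iₙ`,
where `L` and `D` denote Laplacian and diagonal degree matrices. -/
theorem additive_unweighted_sparsifier_deterministic :
    ∃ K : ℝ, 0 < K ∧
      ∀ (n m : ℕ) (E : Fin m → Fin n × Fin n) (b : Fin m → Fin n → ℝ) (d : ℕ) (ε : ℝ)
        (LG DG : Matrix (Fin n) (Fin n) ℝ),
        (∀ e, (E e).1 ≠ (E e).2) →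
        (∀ e e', ({(E e).1, (E e).2} : Finset (Fin n)) = {(E e').1, (E e').2} → e = e') →
        b = (fun e w => (if w = (E e).1 then (1 : ℝ) else 0) - (if w = (E e).2 then 1 else 0)) →
        d = (Finset.univ.sup fun v : Fin n =>
          (Finset.univ.filter fun e => (E e).1 = v ∨ (E e).2 = v).card) →
        LG = (∑ e, vecMulVec (b e) (b e)) →
        DG = Matrix.diagonal (fun v =>
          (((Finset.univ.filter fun e => (E e).1 = v ∨ (E e).2 = v).card : ℕ) : ℝ)) →
        0 < ε → ε < 1 → 2 * ⌈(n : ℝ) / ε^2⌉₊ ≤ m →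
        ∃ F : Finset (Fin m), F.card = ⌈(n : ℝ) / ε^2⌉₊ ∧
          ∀ (LF DF : Matrix (Fin n) (Fin n) ℝ),
            LF = (∑ e ∈ F, vecMulVec (b e) (b e)) →
            DF = Matrix.diagonal (fun v =>
              (((F.filter fun e => (E e).1 = v ∨ (E e).2 = v).card : ℕ) : ℝ)) →
            ((((m : ℝ) / (F.card : ℝ)) • LF - LG) -
              ((2 * (m : ℝ) / (F.card : ℝ)) • DF - (2 : ℝ) • DG -
                (K * ε * d) • (1 : Matrix (Fin n) (Fin n) ℝ))).PosSemidef ∧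
            ((K * ε * d) • (1 : Matrix (Fin n) (Fin n) ℝ) -
              (((m : ℝ) / (F.card : ℝ)) • LF - LG)).PosSemidef := by
  refine ⟨40, by norm_num, ?_⟩
  rintro n m E b d ε LG DG hE - rfl rfl rfl rfl hε hε_lt hcard
  have hb : (fun e w => (if w = (E e).1 then (1 : ℝ) else 0) - (if w = (E e).2 then 1 else 0)) =
      edgeVec E := by
    ext e w
    simp only [edgeVec, Pi.sub_apply, Pi.single_apply]
  have hd (v : Fin n) : edgeDegree E .univ v ≤ Finset.univ.sup fun w => edgeDegree E .univ w :=
    Finset.le_sup (f := edgeDegree E .univ) (Finset.mem_univ v)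
  obtain ⟨F, hF, hlower, hupper⟩ := additive_unweighted_sparsifier_deterministic_general E
    (fun v => Nat.cast_le.2 (hd v)) hε hε_lt (by simpa only [Fintype.card_fin] using hcard)
  simp only [Fintype.card_fin, edgeDegreeMatrix, edgeDegree_of_forall_ne hE] at hF hlower hupper
  refine ⟨F, hF, ?_⟩
  rintro _ _ rfl rfl
  rw [hb]
  exact ⟨hlower, hupper⟩
end

section
/- Let v_1, …, v_m ∈ ℝ^n and x ∈ [0,1]^m satisfy Σ_{i=1}^m x_i v_i v_iᵀ = I_n, let ε ∈ (0, 1/2), and set α := √n/ε and k := m + 2n/ε. Let S ⊆ [m], let Z := Σ_{i ∈ S} v_i v_iᵀ, and let A := (α·Z − ℓ·I_n)^{−2}, where ℓ ∈ ℝ is the unique value with ℓ < α·λ_min(Z) such that tr(A) = 1. Define S' := { i ∈ S : 2α·⟨v_i v_iᵀ, A^{1/2}⟩ < 1/2 }, where A^{1/2} = (α·Z − ℓ·I_n)^{−1}. Then (1/k)·Σ_{j ∈ [m]∖S} x_j·⟨v_j v_jᵀ, A⟩ − (1/k)·Σ_{i ∈ S'} (1 − x_i)·⟨v_i v_iᵀ,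 A⟩ ≥ (1/k)·(1 − ε − λ_min(Z)). (Single-step expected spectral progress of the iterative randomized swapping algorithm.) -/
/-!
Write `M = α Z - ℓ I`, `A = M⁻²` and `aᵢ = ⟨Vᵢ, A⟩ ≥ 0`, where `Vᵢ = vᵢ vᵢᵀ`. Pairing
`∑ i, xᵢ Vᵢ = I` with `A` gives `∑ i, xᵢ aᵢ = tr A = 1`. Replacing `S'` by the larger set `S` only
lowers the expected progress, and for `S` itself the terms `xᵢ aᵢ` recombine, leaving
`1 - ∑ i ∈ S, aᵢ = 1 - ⟨Z, A⟩`.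

To bound `⟨Z, A⟩`, multiply `α Z = M + ℓ I` by `M⁻²`: `α ⟨Z, A⟩ = tr M⁻¹ + ℓ tr M⁻²`. Here
`tr M⁻² = 1`, and Cauchy–Schwarz against the identity gives `tr M⁻¹ ≤ √(n tr M⁻²) = √n = α ε`,
so `⟨Z, A⟩ ≤ ε + ℓ / α ≤ ε + λ_min(Z)`.
-/

open Matrix BigOperators

section SwapSum

variable {ι R : Type*} [Fintype ι] [DecidableEq ι] [Ring R] [PartialOrder R]
  [IsOrderedRing R] {S T : Finset ι} {x a : ι → R}

theorem sum_mul_sub_sum_le_sum_compl_mul_sub_sum (hTS : T ⊆ S) (hx : ∀ i ∈ S, x i ≤ 1)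
    (ha : ∀ i ∈ S, 0 ≤ a i) :
    ∑ i, x i * a i - ∑ i ∈ S, a i ≤ ∑ j ∈ Sᶜ, x j * a j - ∑ i ∈ T, (1 - x i) * a i := by
  have sum_le : ∑ i ∈ T, (1 - x i) * a i ≤ ∑ i ∈ S, (1 - x i) * a i :=
    Finset.sum_le_sum_of_subset_of_nonneg hTS fun i hi _ =>
      mul_nonneg (sub_nonneg.mpr (hx i hi)) (ha i hi)
  calc ∑ i, x i * a i - ∑ i ∈ S, a i
      = ∑ j ∈ Sᶜ, x j * a j - ∑ i ∈ S, (1 - x i) * a i := by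
        simp only [← Finset.sum_add_sum_compl S fun i => x i * a i, sub_mul, one_mul,
          Finset.sum_sub_distrib]
        abel
    _ ≤ ∑ j ∈ Sᶜ, x j * a j - ∑ i ∈ T, (1 - x i) * a i := sub_le_sub_left sum_le _

end SwapSum

section Trace

variable {d R : Type*} [Fintype d]

theorem sq_trace_le_card_mul_trace_transpose_mul_self [CommRing R] [LinearOrder R]
    [IsStrictOrderedRing R] (B : Matrix d d R) :
    B.trace ^ 2 ≤ Fintype.card d * (Bᵀ * B).trace := by
  have sum_diag_sq_le : ∑ i, B i i ^ 2 ≤ (Bᵀ * B).trace := by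
    refine Finset.sum_le_sum fun i _ => ?_
    rw [diag_apply, mul_apply]
    simp only [transpose_apply, ← sq]
    exact Finset.single_le_sum (f := fun j => B j i ^ 2) (fun j _ => sq_nonneg _)
      (Finset.mem_univ i)
  calc B.trace ^ 2 ≤ Fintype.card d * ∑ i, B i i ^ 2 := sq_sum_le_card_mul_sum_sq
    _ ≤ Fintype.card d * (Bᵀ * B).trace := by gcongr

variable [DecidableEq d]

theorem trace_mul_sq_nonneg_of_posSemidef [CommRing R] [PartialOrder R] [StarRing R]
    [AddLeftMono R] {V B : Matrix d d R} (hV : V.PosSemidef) (hB : B.IsHermitian) :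
    0 ≤ (V * B ^ 2).trace := by
  have h : (V * B ^ 2).trace = (B * V * Bᴴ).trace := by
    rw [hB.eq, sq, ← Matrix.mul_assoc, trace_mul_comm, Matrix.mul_assoc]
  rw [h]
  exact (hV.mul_mul_conjTranspose_same B).trace_nonneg

theorem mul_inv_sq_eq_inv [CommRing R] (M : Matrix d d R) : M * M⁻¹ ^ 2 = M⁻¹ := by
  by_cases hM : IsUnit M.det
  · rw [sq, mul_nonsing_inv_cancel_left _ _ hM]
  · simp [nonsing_inv_apply_not_isUnit _ hM]

theorem mul_trace_mul_inv_sq [CommRing R] (Z : Matrix d d R) (α ℓ : R) :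
    α * (Z * (α • Z - ℓ • 1)⁻¹ ^ 2).trace =
      (α • Z - ℓ • 1)⁻¹.trace + ℓ * ((α • Z - ℓ • 1)⁻¹ ^ 2).trace := by
  have h := congrArg trace (mul_inv_sq_eq_inv (α • Z - ℓ • 1))
  simp only [sub_mul, smul_mul_assoc, one_mul, trace_sub, trace_smul, smul_eq_mul] at h
  exact sub_eq_iff_eq_add.mp h

theorem isHermitian_inv_smul_sub_smul_one [CommRing R] [StarRing R] {Z : Matrix d d R}
    (hZ : Z.IsHermitian) {α ℓ : R} (hα : IsSelfAdjoint α) (hℓ : IsSelfAdjoint ℓ) :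
    (α • Z - ℓ • 1)⁻¹.IsHermitian :=
  ((hZ.smul hα).sub (isHermitian_one.smul hℓ)).inv

theorem mul_trace_mul_inv_sq_le {Z : Matrix d d ℝ} (hZ : Z.IsHermitian) (α ℓ : ℝ) :
    α * (Z * (α • Z - ℓ • 1)⁻¹ ^ 2).trace ≤
      √(Fintype.card d * ((α • Z - ℓ • 1)⁻¹ ^ 2).trace)
        + ℓ * ((α • Z - ℓ • 1)⁻¹ ^ 2).trace := by
  have inv_isHermitian := isHermitian_inv_smul_sub_smul_one hZ (.all α) (.all ℓ)
  have cauchy_schwarz := sq_trace_le_card_mul_trace_transpose_mul_self (α • Z - ℓ • 1)⁻¹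
  rw [← conjTranspose_eq_transpose_of_trivial, inv_isHermitian.eq, ← sq] at cauchy_schwarz
  rw [mul_trace_mul_inv_sq]
  gcongr
  exact Real.le_sqrt_of_sq_le cauchy_schwarz

end Trace

theorem swapping_expected_spectral_progress_general {ι d : Type*} [Fintype ι] [DecidableEq ι]
    [Fintype d] [DecidableEq d] {V : ι → Matrix d d ℝ} {x : ι → ℝ} {ε α ℓ lam : ℝ}
    {S T : Finset ι} (hV : ∀ i, (V i).PosSemidef) (hx : ∀ i, x i ≤ 1) (hsum : ∑ i, x i • V i = 1)
    (hε : 0 < ε) (hα : α = √(Fintype.card d) / ε) {A : Matrix d d ℝ}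
    (hA : A = (α • (∑ i ∈ S, V i) - ℓ • 1)⁻¹ ^ 2) (htr : A.trace = 1) (hℓ : ℓ ≤ α * lam)
    (hTS : T ⊆ S) :
    1 - ε - lam ≤
      ∑ j ∈ Sᶜ, x j * (V j * A).trace - ∑ i ∈ T, (1 - x i) * (V i * A).trace := by
  have hZ : (∑ i ∈ S, V i).IsHermitian := (posSemidef_sum S fun i _ => hV i).isHermitian
  have pairing_nonneg (i : ι) : 0 ≤ (V i * A).trace := by
    rw [hA]
    exact trace_mul_sq_nonneg_of_posSemidef (hV i)
      (isHermitian_inv_smul_sub_smul_one hZ (.all α) (.all ℓ))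
  have sum_pairing : ∑ i, x i * (V i * A).trace = 1 := by
    simpa [Finset.sum_mul, trace_sum, htr] using congrArg (fun X => (X * A).trace) hsum
  have sum_pairing_le : ∑ i ∈ S, (V i * A).trace ≤ ε + lam := by
    have : Nonempty d := by
      by_contra h
      rw [not_nonempty_iff] at h
      simp [trace_eq_zero_of_isEmpty] at htr
    have hα_pos : 0 < α := by rw [hα]; positivity
    have hαε : α * ε = √(Fintype.card d) := by rw [hα]; field_simp
    have h := mul_trace_mul_inv_sq_le hZ α ℓ
    rw [← hA, htr, mul_one, mul_one, Finset.sum_mul, trace_sum] at h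
    exact le_of_mul_le_mul_left (by linarith) hα_pos
  calc 1 - ε - lam
      ≤ ∑ i, x i * (V i * A).trace - ∑ i ∈ S, (V i * A).trace := by linarith
    _ ≤ _ := sum_mul_sub_sum_le_sum_compl_mul_sub_sum hTS (fun i _ => hx i)
        fun i _ => pairing_nonneg i

/-- **Single-step expected spectral progress of the iterative randomized swapping
algorithm (Lemma 3.3).** With `α := √n/ε`, `k := m + 2n/ε`, current solution `S` with
`Z := ∑_{i ∈ S} vᵢ vᵢᵀ`, action matrix `A := (α Z - ℓ Iₙ)⁻²` normalized so that
`tr(A) = 1` (where `ℓ < α λ_min(Z)`), `A^{1/2} = (α Z - ℓ Iₙ)⁻¹`, and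
`S' := {i ∈ S : 2α ⟨vᵢvᵢᵀ, A^{1/2}⟩ < 1/2}`, one has
`(1/k) ∑_{j ∉ S} xⱼ ⟨vⱼvⱼᵀ, A⟩ - (1/k) ∑_{i ∈ S'} (1 - xᵢ) ⟨vᵢvᵢᵀ, A⟩
  ≥ (1/k)(1 - ε - λ_min(Z))`. -/
theorem swapping_expected_spectral_progress {n m : ℕ}
    (v : Fin m → Fin n → ℝ) (x : Fin m → ℝ) (ε α k ℓ lam : ℝ)
    (hx : ∀ i, 0 ≤ x i ∧ x i ≤ 1)
    (hsum : (∑ i, x i • vecMulVec (v i) (v i)) = (1 : Matrix (Fin n) (Fin n) ℝ))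
    (hε0 : 0 < ε) (hε1 : ε < 1/2)
    (hα : α = Real.sqrt n / ε) (hk : k = m + 2 * n / ε)
    (S : Finset (Fin m)) (Z A Asq : Matrix (Fin n) (Fin n) ℝ)
    (hZ : Z = ∑ i ∈ S, vecMulVec (v i) (v i))
    (hlam : IsGreatest {t : ℝ | (Z - t • 1).PosSemidef} lam)
    (hℓ : ℓ < α * lam)
    (hAsq : Asq = (α • Z - ℓ • 1)⁻¹)
    (hA : A = Asq ^ 2)
    (htr : A.trace = 1)
    (S' : Finset (Fin m))
    (hS' : S' = S.filter fun i => 2 * α * (vecMulVec (v i) (v i) * Asq).trace < 1/2) :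
    (1/k) * (1 - ε - lam) ≤
      (1/k) * (∑ j ∈ Sᶜ, x j * (vecMulVec (v j) (v j) * A).trace)
        - (1/k) * (∑ i ∈ S', (1 - x i) * (vecMulVec (v i) (v i) * A).trace) := by
  subst hk hA hAsq hZ hS'
  rw [← mul_sub]
  gcongr (1 / _) * ?_
  exact swapping_expected_spectral_progress_general (V := fun i => vecMulVec (v i) (v i))
    (fun i => posSemidef_vecMulVec_self_star (v i)) (fun i => (hx i).2) hsum hε0
    (by simpa using hα) rfl htr hℓ.le (Finset.filter_subset _ S)
end

section
/- Let v_1, …, v_m ∈ ℝ^n and x ∈ [0,1]^m satisfy Σ_{i=1}^m x_i v_i v_iᵀ = I_n, let c ∈ ℝ_+^m, let ε ∈ (0, 1/2), and set α := √n/ε and k := m + 2n/ε. Let S ⊆ [m], let Z := Σ_{i ∈ S} v_i v_iᵀ, and suppose λ_min(Z) < 1. Let A := (α·Z − ℓ·I_n)^{−2}, where ℓ ∈ ℝ is the unique value with ℓ < α·λ_min(Z) such that tr(A) = 1, and define S' := { i ∈ S : 2α·⟨v_i v_iᵀ, A^{1/2}⟩ < 1/2 }, where A^{1/2} = (α·Z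 − ℓ·I_n)^{−1}. Define E⁺ := (1/k)·Σ_{j ∈ [m]∖S} c_j·x_j·(1 + 2α·⟨v_j v_jᵀ, A^{1/2}⟩) and E⁻ := (1/k)·Σ_{i ∈ S'} c_i·(1 − x_i)·(1 − 2α·⟨v_i v_iᵀ, A^{1/2}⟩). Then (1/k)·(⟨c, x⟩ − c(S)) ≤ E⁺ − E⁻ ≤ (1/k)·(⟨c, x⟩ − c(S) + 14·n·c_∞/ε), where c(S) := Σ_{i ∈ S} c_i. (Single-step expected cost change of the iterative randomized swapping algorithm.) -/
open Matrix BigOperators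

/-!
With the weights `tᵢ = 2α⟨vᵢvᵢᵀ, A^{1/2}⟩`, expanding the products gives
`k(E⁺ - E⁻) = ⟨c,x⟩ - c(S) + ∑_{j ∉ S} cⱼxⱼtⱼ + ∑_{S'} cᵢ(1-xᵢ)tᵢ + ∑_{S \ S'} cᵢ(1-xᵢ)`.
Since `αZ - ℓI` is positive definite, all `tᵢ ≥ 0`, so the excess over `⟨c,x⟩ - c(S)` is
nonnegative, which is the lower bound. For the upper bound, `1 ≤ 2tᵢ` on `S \ S'`, so the excess is
at most `c_∞ (∑ᵢ xᵢtᵢ + 2 ∑_{i ∈ S} tᵢ) = c_∞ (2α tr A^{1/2} + 4α ⟨Z, A^{1/2}⟩)`.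
Here `tr A^{1/2} ≤ √n` by Cauchy–Schwarz and `tr A = 1`, and
`α ⟨Z, A^{1/2}⟩ = n + ℓ tr A^{1/2} ≤ n + α√n` because `ℓ ≤ α`. The total is at most
`c_∞ (4n + 6α√n)`, where `α√n = n/ε`.
-/

lemma posDef_smul_sub_smul_one {κ : Type*} [DecidableEq κ] {Z : Matrix κ κ ℝ} {α ℓ lam : ℝ}
    (hα : 0 ≤ α) (hZ : (Z - lam • 1).PosSemidef) (hℓ : ℓ < α * lam) :
    (α • Z - ℓ • 1).PosDef := by
  have hsplit : α • Z - ℓ • 1 = (α * lam - ℓ) • 1 + α • (Z - lam • 1) := by module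
  rw [hsplit]
  exact (PosDef.one.smul (sub_pos.2 hℓ)).add_posSemidef (hZ.smul hα)

section Trace

variable {κ : Type*} [Fintype κ]

lemma trace_vecMulVec_mul_nonneg {B : Matrix κ κ ℝ} (hB : B.PosSemidef) (w : κ → ℝ) :
    0 ≤ (vecMulVec w w * B).trace := by
  rw [vecMulVec_mul, trace_vecMulVec, dotProduct_comm, ← dotProduct_mulVec]
  simpa using hB.dotProduct_mulVec_nonneg w

variable [DecidableEq κ]

lemma trace_le_sqrt_card_mul_trace_sq {B : Matrix κ κ ℝ} (hB : B.IsSymm) :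
    B.trace ≤ √(Fintype.card κ * (B ^ 2).trace) := by
  have diag_sq_le (i : κ) : B i i ^ 2 ≤ (B ^ 2) i i := by
    have hrow : (B ^ 2) i i = ∑ j, B i j ^ 2 := by
      simp only [pow_two, mul_apply, hB.apply]
    rw [hrow]
    exact Finset.single_le_sum (f := fun j => B i j ^ 2) (fun j _ => sq_nonneg _)
      (Finset.mem_univ i)
  refine Real.le_sqrt_of_sq_le ?_
  calc B.trace ^ 2 ≤ Fintype.card κ * ∑ i, B i i ^ 2 := sq_sum_le_card_mul_sum_sq
    _ ≤ Fintype.card κ * (B ^ 2).trace := by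
      gcongr
      exact Finset.sum_le_sum fun i _ => diag_sq_le i

lemma mul_trace_mul_inv_smul_sub {R : Type*} [CommRing R] {Z : Matrix κ κ R} {α ℓ : R}
    (h : IsUnit (α • Z - ℓ • 1)) :
    α * (Z * (α • Z - ℓ • 1)⁻¹).trace =
      Fintype.card κ + ℓ * ((α • Z - ℓ • 1)⁻¹).trace := by
  have hinv := congrArg trace (mul_nonsing_inv _ ((isUnit_iff_isUnit_det _).1 h))
  rwa [sub_mul, smul_mul, smul_mul, one_mul, trace_sub, trace_smul, trace_smul, trace_one,
    smul_eq_mul, smul_eq_mul, sub_eq_iff_eq_add] at hinv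

end Trace

section SwapWeight

variable {ι κ : Type*} [Fintype κ]

/-- The weight `2α⟨wwᵀ, B⟩` that, with `B = A^{1/2}`, tilts the probability of swapping the vector
`w` in or out. -/
def swapWeight (α : ℝ) (B : Matrix κ κ ℝ) (w : κ → ℝ) : ℝ :=
  2 * α * (vecMulVec w w * B).trace

lemma swapWeight_nonneg {α : ℝ} {B : Matrix κ κ ℝ} (hα : 0 ≤ α) (hB : B.PosSemidef)
    (w : κ → ℝ) : 0 ≤ swapWeight α B w :=
  mul_nonneg (by positivity) (trace_vecMulVec_mul_nonneg hB w)

lemma sum_mul_swapWeight (α : ℝ) (B : Matrix κ κ ℝ) (v : ι → κ → ℝ) (y : ι → ℝ)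
    (s : Finset ι) :
    ∑ i ∈ s, y i * swapWeight α B (v i) =
      2 * α * ((∑ i ∈ s, y i • vecMulVec (v i) (v i)) * B).trace := by
  simp only [swapWeight, Finset.sum_mul, trace_sum, Finset.mul_sum, smul_mul, trace_smul,
    smul_eq_mul, mul_left_comm]

lemma sum_swapWeight (α : ℝ) (B : Matrix κ κ ℝ) (v : ι → κ → ℝ) (s : Finset ι) :
    ∑ i ∈ s, swapWeight α B (v i) =
      2 * (α * ((∑ i ∈ s, vecMulVec (v i) (v i)) * B).trace) := by
  simpa [mul_assoc] using sum_mul_swapWeight α B v 1 s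

lemma sum_mul_swapWeight_add_two_mul_sum_le [Fintype ι] [DecidableEq κ] {v : ι → κ → ℝ}
    {x : ι → ℝ} {α ℓ : ℝ} {S : Finset ι} {Z B : Matrix κ κ ℝ}
    (hsum : ∑ i, x i • vecMulVec (v i) (v i) = 1) (hα : 0 ≤ α) (hℓ : ℓ ≤ α)
    (hZ : Z = ∑ i ∈ S, vecMulVec (v i) (v i)) (hpos : (α • Z - ℓ • 1).PosDef)
    (hB : B = (α • Z - ℓ • 1)⁻¹) (htr : (B ^ 2).trace = 1) :
    ∑ i, x i * swapWeight α B (v i) + 2 * ∑ i ∈ S, swapWeight α B (v i) ≤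
      4 * Fintype.card κ + 6 * (α * √(Fintype.card κ)) := by
  have hBpos : B.PosSemidef := hB ▸ hpos.inv.posSemidef
  have htrace_le : B.trace ≤ √(Fintype.card κ) := by
    simpa [htr] using trace_le_sqrt_card_mul_trace_sq (isHermitian_iff_isSymm.1 hBpos.isHermitian)
  have hZB : α * (Z * B).trace = Fintype.card κ + ℓ * B.trace :=
    hB ▸ mul_trace_mul_inv_smul_sub hpos.isUnit
  calc ∑ i, x i * swapWeight α B (v i) + 2 * ∑ i ∈ S, swapWeight α B (v i)
      = 4 * Fintype.card κ + 2 * (α * B.trace) + 4 * (ℓ * B.trace) := by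
        rw [sum_mul_swapWeight, hsum, one_mul, sum_swapWeight, ← hZ, hZB]
        ring
    _ ≤ 4 * Fintype.card κ + 2 * (α * B.trace) + 4 * (α * B.trace) := by
        gcongr
        exact hBpos.trace_nonneg
    _ = 4 * Fintype.card κ + 6 * (α * B.trace) := by ring
    _ ≤ 4 * Fintype.card κ + 6 * (α * √(Fintype.card κ)) := by gcongr

end SwapWeight

section Cost

variable {ι : Type*}

/-- The expected cost `k E⁻` of the removed vector, up to the normalization `1/k`, when the
vector `i` has swap weight `t i`; the filter `t i < 1 / 2` selects the set `S'` of removable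
vectors. -/
noncomputable def removalCost (x c t : ι → ℝ) (S : Finset ι) : ℝ :=
  ∑ i ∈ S with t i < 1 / 2, c i * (1 - x i) * (1 - t i)

variable [Fintype ι] [DecidableEq ι]

/-- The expected cost `k E⁺` of the inserted vector, up to the normalization `1/k`, with swap
weights `t` as in `removalCost`. -/
def insertionCost (x c t : ι → ℝ) (S : Finset ι) : ℝ :=
  ∑ j ∈ Sᶜ, c j * x j * (1 + t j)

/-- The amount by which `insertionCost - removalCost` exceeds `⟨c,x⟩ - c(S)`. A vector of `S`
counts with `t i` if it is removable and with `1` otherwise. -/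
noncomputable def swapExcess (x c t : ι → ℝ) (S : Finset ι) : ℝ :=
  ∑ j ∈ Sᶜ, c j * x j * t j + ∑ i ∈ S, c i * (1 - x i) * if t i < 1 / 2 then t i else 1

lemma insertionCost_sub_removalCost (x c t : ι → ℝ) (S : Finset ι) :
    insertionCost x c t S - removalCost x c t S =
      ∑ i, c i * x i - ∑ i ∈ S, c i + swapExcess x c t S := by
  have hins : insertionCost x c t S = ∑ j ∈ Sᶜ, c j * x j + ∑ j ∈ Sᶜ, c j * x j * t j := by
    simp only [insertionCost, mul_add, mul_one, Finset.sum_add_distrib]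
  have hrem : removalCost x c t S = ∑ i ∈ S, c i - ∑ i ∈ S, c i * x i -
      ∑ i ∈ S, c i * (1 - x i) * if t i < 1 / 2 then t i else 1 := by
    rw [removalCost, Finset.sum_filter, ← Finset.sum_sub_distrib, ← Finset.sum_sub_distrib]
    refine Finset.sum_congr rfl fun i _ => ?_
    split_ifs <;> ring
  rw [hins, hrem, swapExcess, ← Finset.sum_add_sum_compl S fun i => c i * x i]
  ring

lemma swapExcess_nonneg {x c t : ι → ℝ} (hx : ∀ i, 0 ≤ x i ∧ x i ≤ 1)
    (hc : ∀ i, 0 ≤ c i) (ht : ∀ i, 0 ≤ t i) (S : Finset ι) : 0 ≤ swapExcess x c t S := by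
  refine add_nonneg (Finset.sum_nonneg fun i _ => ?_) (Finset.sum_nonneg fun i _ => ?_)
  · exact mul_nonneg (mul_nonneg (hc i) (hx i).1) (ht i)
  · refine mul_nonneg (mul_nonneg (hc i) (sub_nonneg.2 (hx i).2)) ?_
    split_ifs
    exacts [ht i, zero_le_one]

lemma swapExcess_le {x c t : ι → ℝ} {C : ℝ} (hx : ∀ i, 0 ≤ x i) (hc : ∀ i, 0 ≤ c i)
    (hcC : ∀ i, c i ≤ C) (hC : 0 ≤ C) (ht : ∀ i, 0 ≤ t i) (S : Finset ι) :
    swapExcess x c t S ≤ C * (∑ i, x i * t i + 2 * ∑ i ∈ S, t i) := by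
  have hout : ∑ j ∈ Sᶜ, c j * x j * t j ≤ C * ∑ i, x i * t i := by
    have hxt (i : ι) : 0 ≤ x i * t i := mul_nonneg (hx i) (ht i)
    calc ∑ j ∈ Sᶜ, c j * x j * t j ≤ ∑ j ∈ Sᶜ, C * (x j * t j) :=
          Finset.sum_le_sum fun j _ =>
            (mul_assoc _ _ _).trans_le (mul_le_mul_of_nonneg_right (hcC j) (hxt j))
      _ = C * ∑ j ∈ Sᶜ, x j * t j := (Finset.mul_sum ..).symm
      _ ≤ C * ∑ i, x i * t i :=
        mul_le_mul_of_nonneg_left (Finset.sum_le_univ_sum_of_nonneg hxt) hC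
  have hin : ∑ i ∈ S, c i * (1 - x i) * (if t i < 1 / 2 then t i else 1) ≤
      C * (2 * ∑ i ∈ S, t i) := by
    rw [Finset.mul_sum, Finset.mul_sum]
    refine Finset.sum_le_sum fun i _ => ?_
    have hcx : c i * (1 - x i) ≤ C :=
      (mul_le_of_le_one_right (hc i) (by linarith [hx i])).trans (hcC i)
    have hweight : (if t i < 1 / 2 then t i else 1) ≤ 2 * t i := by
      split_ifs <;> linarith [ht i]
    refine mul_le_mul hcx hweight ?_ hC
    split_ifs
    exacts [ht i, zero_le_one]
  rw [mul_add]
  exact add_le_add hout hin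

end Cost

theorem swapping_expected_cost_change_general {ι κ : Type*} [Fintype ι] [DecidableEq ι]
    [Fintype κ] [DecidableEq κ] (v : ι → κ → ℝ) (x c : ι → ℝ) (ε α k ℓ : ℝ)
    (hx : ∀ i, 0 ≤ x i ∧ x i ≤ 1) (hc : ∀ i, 0 ≤ c i)
    (hsum : ∑ i, x i • vecMulVec (v i) (v i) = 1) (hε : 0 < ε)
    (hα : α = √(Fintype.card κ) / ε) (hk : k = Fintype.card ι + 2 * Fintype.card κ / ε)
    (S : Finset ι) (Z B : Matrix κ κ ℝ) (hZ : Z = ∑ i ∈ S, vecMulVec (v i) (v i))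
    (hpos : (α • Z - ℓ • 1).PosDef) (hℓ : ℓ ≤ α) (hB : B = (α • Z - ℓ • 1)⁻¹)
    (htr : (B ^ 2).trace = 1) (t : ι → ℝ) (ht : t = fun i => swapWeight α B (v i)) :
    1 / k * (∑ i, c i * x i - ∑ i ∈ S, c i) ≤
        1 / k * insertionCost x c t S - 1 / k * removalCost x c t S ∧
      1 / k * insertionCost x c t S - 1 / k * removalCost x c t S ≤
        1 / k * (∑ i, c i * x i - ∑ i ∈ S, c i + (4 + 6 / ε) * (Fintype.card κ * ⨆ i, c i)) := by
  have hk0 : 0 ≤ 1 / k := by rw [hk]; positivity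
  have hα0 : 0 ≤ α := by rw [hα]; positivity
  have hαcard : α * √(Fintype.card κ) = Fintype.card κ / ε := by
    rw [hα, div_mul_eq_mul_div, Real.mul_self_sqrt (Nat.cast_nonneg _)]
  have ht0 (i : ι) : 0 ≤ t i := by
    rw [ht]
    exact swapWeight_nonneg hα0 (hB ▸ hpos.inv.posSemidef) (v i)
  have hc0 : 0 ≤ ⨆ i, c i := Real.iSup_nonneg hc
  have hexcess : swapExcess x c t S ≤ (4 + 6 / ε) * (Fintype.card κ * ⨆ i, c i) :=
    calc swapExcess x c t S ≤ (⨆ i, c i) * (∑ i, x i * t i + 2 * ∑ i ∈ S, t i) :=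
          swapExcess_le (fun i => (hx i).1) hc (le_ciSup (Set.finite_range c).bddAbove) hc0 ht0 S
      _ ≤ (⨆ i, c i) * (4 * Fintype.card κ + 6 * (α * √(Fintype.card κ))) := by
        rw [ht]
        exact mul_le_mul_of_nonneg_left
          (sum_mul_swapWeight_add_two_mul_sum_le hsum hα0 hℓ hZ hpos hB htr) hc0
      _ = (4 + 6 / ε) * (Fintype.card κ * ⨆ i, c i) := by rw [hαcard]; ring
  rw [← mul_sub, insertionCost_sub_removalCost]
  constructor <;> gcongr
  exact le_add_of_nonneg_right (swapExcess_nonneg hx hc ht0 S)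

/-- **Single-step expected cost change of the iterative randomized swapping algorithm
(Lemma 3.6).** With `α := √n/ε`, `k := m + 2n/ε`, current solution `S` with
`Z := ∑_{i ∈ S} vᵢ vᵢᵀ` satisfying `λ_min(Z) < 1`, action matrix `A := (α Z - ℓ Iₙ)⁻²`
normalized so that `tr(A) = 1` (where `ℓ < α λ_min(Z)`), `A^{1/2} = (α Z - ℓ Iₙ)⁻¹`,
and `S' := {i ∈ S : 2α ⟨vᵢvᵢᵀ, A^{1/2}⟩ < 1/2}`, setting
`E⁺ := (1/k) ∑_{j ∉ S} cⱼ xⱼ (1 + 2α ⟨vⱼvⱼᵀ, A^{1/2}⟩)` and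
`E⁻ := (1/k) ∑_{i ∈ S'} cᵢ (1 - xᵢ)(1 - 2α ⟨vᵢvᵢᵀ, A^{1/2}⟩)`, one has
`(1/k)(⟨c,x⟩ - c(S)) ≤ E⁺ - E⁻ ≤ (1/k)(⟨c,x⟩ - c(S) + 14 n c_∞ / ε)`. -/
theorem swapping_expected_cost_change {n m : ℕ}
    (v : Fin m → Fin n → ℝ) (x c : Fin m → ℝ) (ε α k ℓ lam : ℝ)
    (hx : ∀ i, 0 ≤ x i ∧ x i ≤ 1) (hc : ∀ i, 0 ≤ c i)
    (hsum : (∑ i, x i • vecMulVec (v i) (v i)) = (1 : Matrix (Fin n) (Fin n) ℝ))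
    (hε0 : 0 < ε) (hε1 : ε < 1/2)
    (hα : α = Real.sqrt n / ε) (hk : k = m + 2 * n / ε)
    (S : Finset (Fin m)) (Z A Asq : Matrix (Fin n) (Fin n) ℝ)
    (hZ : Z = ∑ i ∈ S, vecMulVec (v i) (v i))
    (hlam : IsGreatest {t : ℝ | (Z - t • 1).PosSemidef} lam)
    (hlam1 : lam < 1)
    (hℓ : ℓ < α * lam)
    (hAsq : Asq = (α • Z - ℓ • 1)⁻¹)
    (hA : A = Asq ^ 2)
    (htr : A.trace = 1)
    (S' : Finset (Fin m))
    (hS' : S' = S.filter fun i => 2 * α * (vecMulVec (v i) (v i) * Asq).trace < 1/2)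
    (Ep Em : ℝ)
    (hEp : Ep = (1/k) * ∑ j ∈ Sᶜ,
      c j * x j * (1 + 2 * α * (vecMulVec (v j) (v j) * Asq).trace))
    (hEm : Em = (1/k) * ∑ i ∈ S',
      c i * (1 - x i) * (1 - 2 * α * (vecMulVec (v i) (v i) * Asq).trace)) :
    (1/k) * ((∑ i, c i * x i) - ∑ i ∈ S, c i) ≤ Ep - Em ∧
    Ep - Em ≤ (1/k) * ((∑ i, c i * x i) - (∑ i ∈ S, c i) + 14 * n * (⨆ i, c i) / ε) := by
  have hα0 : 0 ≤ α := by rw [hα]; positivity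
  obtain ⟨hlower, hupper⟩ := swapping_expected_cost_change_general v x c ε α k ℓ hx hc hsum hε0
    (by simpa using hα) (by simpa using hk) S Z Asq hZ (posDef_smul_sub_smul_one hα0 hlam.1 hℓ)
    (hℓ.le.trans (mul_le_of_le_one_right hα0 hlam1.le)) hAsq (hA ▸ htr) _ rfl
  have hconst : 4 + 6 / ε ≤ 14 / ε := by rw [← sub_nonneg]; field_simp; linarith
  have hc0 : 0 ≤ ⨆ i, c i := Real.iSup_nonneg hc
  rw [hEp, hEm, hS']
  refine ⟨hlower, hupper.trans ?_⟩
  rw [hk, Fintype.card_fin, mul_assoc (14 : ℝ), mul_div_right_comm (14 : ℝ)]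
  gcongr
end

section
/- Let Z be an n×n real symmetric matrix, let α > 0, and let ℓ ∈ ℝ be such that ℓ·I_n + α·Z is positive definite and the matrix A := (ℓ·I_n + α·Z)^{−2} satisfies tr(A) = 1. Then tr(A·Z) ≤ λ_min(Z) + √n/α. -/
open Matrix

/-!
Write `M = ℓ I + α Z` and `A = M⁻²`. Since `α Z = M - ℓ I`, one has `α tr(A Z) = tr M⁻¹ - ℓ tr A`.
Cauchy–Schwarz for the Frobenius inner product of `M⁻¹` with `I` bounds `tr M⁻¹` by `√(n tr A)`, and
positivity of `M` means `Z ⪰ -(ℓ/α) I`, that is, `-(ℓ/α) ≤ λ_min(Z)`. As `tr A ≥ 0`, the two bounds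
add up to `tr(A Z) ≤ λ_min(Z) tr A + √(n tr A) / α`.
-/

section Algebra

variable {n R K : Type*} [DecidableEq n]

theorem inv_eq_smul_inv_sq_add_smul_inv_sq_mul [Fintype n] [CommRing R] [CommSemiring K]
    [Algebra K R] {M Z : Matrix n n R} {a b : K} (hM : IsUnit M) (h : M = b • 1 + a • Z) :
    M⁻¹ = b • M⁻¹ ^ 2 + a • (M⁻¹ ^ 2 * Z) :=
  calc M⁻¹ = M⁻¹ ^ 2 * M := by
        rw [sq, mul_assoc, nonsing_inv_mul M ((isUnit_iff_isUnit_det M).mp hM), mul_one]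
    _ = M⁻¹ ^ 2 * (b • 1 + a • Z) := congrArg (M⁻¹ ^ 2 * ·) h
    _ = b • M⁻¹ ^ 2 + a • (M⁻¹ ^ 2 * Z) := by
        rw [mul_add, mul_smul_comm, mul_one, mul_smul_comm]

theorem posSemidef_sub_neg_div_smul_one [Field K] [LinearOrder K] [StarRing K]
    [StarOrderedRing K] [Ring R] [PartialOrder R] [StarRing R] [Algebra K R] [StarModule K R]
    [PosSMulMono K R] {Z : Matrix n n R} {a b : K} (ha : 0 < a)
    (h : (b • (1 : Matrix n n R) + a • Z).PosSemidef) :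
    (Z - (-(b / a)) • (1 : Matrix n n R)).PosSemidef := by
  have rescale : Z - (-(b / a)) • (1 : Matrix n n R) = a⁻¹ • (b • 1 + a • Z) := by
    rw [smul_add, smul_smul, inv_smul_smul₀ ha.ne', neg_smul, sub_neg_eq_add, add_comm,
      div_eq_inv_mul]
  rw [rescale]
  exact h.smul (inv_nonneg.mpr ha.le)

end Algebra

section Trace

variable {m n 𝕜 : Type*} [Fintype m] [Fintype n] [RCLike 𝕜]

theorem re_trace_conjTranspose_mul_self (B : Matrix m n 𝕜) :
    RCLike.re (Bᴴ * B).trace = ∑ j, ∑ i, ‖B i j‖ ^ 2 := by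
  simp only [trace, diag_apply, mul_apply, conjTranspose_apply, RCLike.star_def, RCLike.conj_mul,
    map_sum, ← RCLike.ofReal_pow, RCLike.ofReal_re]

theorem re_trace_conjTranspose_mul_self_nonneg (B : Matrix m n 𝕜) :
    0 ≤ RCLike.re (Bᴴ * B).trace := by
  rw [re_trace_conjTranspose_mul_self]
  positivity

theorem norm_trace_sq_le_card_mul_re_trace_conjTranspose_mul_self (B : Matrix n n 𝕜) :
    ‖B.trace‖ ^ 2 ≤ Fintype.card n * RCLike.re (Bᴴ * B).trace :=
  calc ‖B.trace‖ ^ 2 ≤ (∑ i, ‖B i i‖) ^ 2 := by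
        gcongr
        exact norm_sum_le _ _
    _ ≤ Fintype.card n * ∑ i, ‖B i i‖ ^ 2 := sq_sum_le_card_mul_sum_sq
    _ ≤ Fintype.card n * ∑ j, ∑ i, ‖B i j‖ ^ 2 := by
        gcongr with j
        exact Finset.single_le_sum (f := fun i ↦ ‖B i j‖ ^ 2) (fun _ _ ↦ sq_nonneg _)
          (Finset.mem_univ j)
    _ = Fintype.card n * RCLike.re (Bᴴ * B).trace := by rw [re_trace_conjTranspose_mul_self]

theorem re_trace_le_sqrt_card_mul_re_trace_conjTranspose_mul_self (B : Matrix n n 𝕜) :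
    RCLike.re B.trace ≤ √(Fintype.card n * RCLike.re (Bᴴ * B).trace) :=
  (RCLike.re_le_norm _).trans <|
    Real.le_sqrt_of_sq_le (norm_trace_sq_le_card_mul_re_trace_conjTranspose_mul_self B)

open scoped ComplexOrder in
theorem trace_action_matrix_bound_general [DecidableEq n] {Z : Matrix n n 𝕜} {α ℓ lam : ℝ}
    (hα : 0 < α) (hpd : (ℓ • (1 : Matrix n n 𝕜) + α • Z).PosDef) {A : Matrix n n 𝕜}
    (hA : A = (ℓ • (1 : Matrix n n 𝕜) + α • Z)⁻¹ ^ 2)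
    (hlam : IsGreatest {t : ℝ | (Z - t • (1 : Matrix n n 𝕜)).PosSemidef} lam) :
    RCLike.re (A * Z).trace ≤
      lam * RCLike.re A.trace + √(Fintype.card n * RCLike.re A.trace) / α := by
  set B := (ℓ • (1 : Matrix n n 𝕜) + α • Z)⁻¹
  have hAB : A = Bᴴ * B := by rw [hA, sq, hpd.inv.isHermitian.eq]
  have trace_nonneg : 0 ≤ RCLike.re A.trace := hAB ▸ re_trace_conjTranspose_mul_self_nonneg B
  have trace_B_le : RCLike.re B.trace ≤ √(Fintype.card n * RCLike.re A.trace) :=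
    hAB ▸ re_trace_le_sqrt_card_mul_re_trace_conjTranspose_mul_self B
  have trace_B : RCLike.re B.trace = ℓ * RCLike.re A.trace + α * RCLike.re (A * Z).trace := by
    have hBA : B = ℓ • A + α • (A * Z) := hA ▸ inv_eq_smul_inv_sq_add_smul_inv_sq_mul hpd.isUnit rfl
    simpa only [trace_add, trace_smul, map_add, RCLike.smul_re] using
      congrArg (fun C ↦ RCLike.re C.trace) hBA
  have le_lam : -(ℓ / α) ≤ lam := hlam.2 (posSemidef_sub_neg_div_smul_one hα hpd.posSemidef)
  calc RCLike.re (A * Z).trace = -(ℓ / α) * RCLike.re A.trace + RCLike.re B.trace / α := by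
        rw [trace_B]
        field_simp
        ring
    _ ≤ lam * RCLike.re A.trace + √(Fintype.card n * RCLike.re A.trace) / α := by gcongr

end Trace

/-- **Trace bound for the action matrix against a symmetric matrix.**
Let `Z` be an `n × n` real symmetric matrix, `α > 0`, and `ℓ ∈ ℝ` such that
`ℓ Iₙ + α Z` is positive definite and `A := (ℓ Iₙ + α Z)⁻²` satisfies `tr(A) = 1`.
Then `tr(A Z) ≤ λ_min(Z) + √n / α`, where `λ_min(Z)` is the minimum eigenvalue of `Z`,
characterized as the greatest `t` with `Z - t Iₙ ⪰ 0`. -/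
theorem trace_action_matrix_bound {n : ℕ} (Z : Matrix (Fin n) (Fin n) ℝ)
    (hZ : Z.IsSymm) (α : ℝ) (hα : 0 < α) (ℓ lam : ℝ)
    (hpd : (ℓ • (1 : Matrix (Fin n) (Fin n) ℝ) + α • Z).PosDef)
    (A : Matrix (Fin n) (Fin n) ℝ)
    (hA : A = ((ℓ • (1 : Matrix (Fin n) (Fin n) ℝ) + α • Z)⁻¹) ^ 2)
    (htr : A.trace = 1)
    (hlam : IsGreatest {t : ℝ | (Z - t • 1).PosSemidef} lam) :
    (A * Z).trace ≤ lam + Real.sqrt n / α := by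
  simpa [htr] using trace_action_matrix_bound_general hα hpd hA hlam
end

section
/- Let Z be an n×n real positive semidefinite matrix, let α > 0, and let ℓ ∈ ℝ be such that ℓ·I_n + α·Z is positive definite and A := (α·Z + ℓ·I_n)^{−2} satisfies tr(A) = 1. Then tr(Z·A) ≤ √n/α + λ_min(Z), and α·tr(Z·A^{1/2}) ≤ n + α·√n·λ_min(Z), where A^{1/2} = (α·Z + ℓ·I_n)^{−1}. -/
open Matrix

/-!
Put `M = α Z + ℓ I` and `B = M⁻¹`, so that `A = B²`. Multiplying `α Z = M - ℓ I` by `B²` and by `B`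
and taking traces gives `α tr(Z A) = tr B - ℓ tr A` and `α tr(Z B) = n - ℓ tr B`.
Cauchy–Schwarz gives `0 ≤ tr B ≤ √(n tr A)`, while positivity of `M` says `Z - (-ℓ / α) I ⪰ 0`,
hence `-ℓ ≤ α λ_min(Z)`; also `λ_min(Z) ≥ 0` since `Z ⪰ 0`.
-/

section Ring

variable {ι R S : Type*} [Fintype ι] [DecidableEq ι] [Ring R] [Monoid S] [DistribMulAction S R]
  [IsScalarTower S R R]

lemma smul_trace_mul_eq_sub (Z B : Matrix ι ι R) (c d : S) :
    c • (Z * B).trace = ((c • Z + d • 1) * B).trace - d • B.trace := by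
  simp only [add_mul, smul_mul_assoc, one_mul, trace_add, trace_smul, add_sub_cancel_right]

lemma smul_trace_mul_of_mul_eq_one {Z B : Matrix ι ι R} {c d : S}
    (h : (c • Z + d • 1) * B = 1) :
    c • (Z * B).trace = Fintype.card ι - d • B.trace := by
  rw [smul_trace_mul_eq_sub Z B c d, h, trace_one]

lemma smul_trace_mul_sq_of_mul_eq_one {Z B : Matrix ι ι R} {c d : S}
    (h : (c • Z + d • 1) * B = 1) :
    c • (Z * B ^ 2).trace = B.trace - d • (B ^ 2).trace := by
  rw [smul_trace_mul_eq_sub Z (B ^ 2) c d, sq, ← mul_assoc, h, one_mul]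

end Ring

section RCLike

open RCLike
open scoped ComplexOrder

variable {ι 𝕜 : Type*} [Fintype ι] [RCLike 𝕜]

lemma norm_trace_mul_conjTranspose_sq_le (A B : Matrix ι ι 𝕜) :
    ‖(B * Aᴴ).trace‖ ^ 2 ≤ re (A * Aᴴ).trace * re (B * Bᴴ).trace := by
  classical
  let := toMatrixSeminormedAddCommGroup (1 : Matrix ι ι 𝕜) .one
  let := toMatrixInnerProductSpace (1 : Matrix ι ι 𝕜) .one
  -- The inner product weighted by `M` is `tr (Y M Xᴴ)` by definition; here `M = 1`.
  have inner_eq (X Y : Matrix ι ι 𝕜) : inner 𝕜 X Y = (Y * Xᴴ).trace :=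
    congrArg (fun W ↦ (W * Xᴴ).trace) (mul_one Y)
  have cauchy_schwarz := inner_mul_inner_self_le (𝕜 := 𝕜) A B
  rw [norm_inner_symm B A, ← sq] at cauchy_schwarz
  simpa only [inner_eq] using cauchy_schwarz

lemma re_trace_le_sqrt_card_mul (B : Matrix ι ι 𝕜) :
    re B.trace ≤ √(Fintype.card ι * re (B * Bᴴ).trace) := by
  classical
  have norm_sq_le : ‖B.trace‖ ^ 2 ≤ Fintype.card ι * re (B * Bᴴ).trace := by
    simpa using norm_trace_mul_conjTranspose_sq_le 1 B
  exact (re_le_norm _).trans (Real.le_sqrt_of_sq_le norm_sq_le)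

lemma re_trace_nonneg_of_posSemidef {B : Matrix ι ι 𝕜} (hB : B.PosSemidef) : 0 ≤ re B.trace :=
  (nonneg_iff.1 hB.trace_nonneg).1

end RCLike

section Shift

open scoped ComplexOrder

variable {ι 𝕜 : Type*} [DecidableEq ι] [RCLike 𝕜] {Z : Matrix ι ι 𝕜} {α ℓ : ℝ}

lemma posSemidef_sub_neg_div_smul_one_s18 (hα : 0 < α) (h : (α • Z + ℓ • 1).PosSemidef) :
    (Z - (-ℓ / α) • 1).PosSemidef := by
  have rescale : Z - (-ℓ / α) • 1 = α⁻¹ • (α • Z + ℓ • 1) := by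
    rw [smul_add, inv_smul_smul₀ hα.ne', smul_smul, neg_div, neg_smul, sub_neg_eq_add,
      div_eq_inv_mul]
  exact rescale ▸ h.smul (inv_nonneg.2 hα.le)

lemma neg_le_mul_of_mem_upperBounds {lam : ℝ} (hα : 0 < α) (h : (α • Z + ℓ • 1).PosSemidef)
    (hlam : lam ∈ upperBounds {t : ℝ | (Z - t • 1).PosSemidef}) : -ℓ ≤ α * lam :=
  (div_le_iff₀' hα).1 (hlam (posSemidef_sub_neg_div_smul_one_s18 hα h))

end Shift

open RCLike in
open scoped ComplexOrder in
theorem trace_action_matrix_psd_bounds_general {ι 𝕜 : Type*} [Fintype ι] [DecidableEq ι]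
    [RCLike 𝕜] {Z : Matrix ι ι 𝕜} (hZ : Z.PosSemidef) {α : ℝ} (hα : 0 < α) {ℓ lam : ℝ}
    (hpd : (ℓ • (1 : Matrix ι ι 𝕜) + α • Z).PosDef) {A Asq : Matrix ι ι 𝕜}
    (hAsq : Asq = (α • Z + ℓ • (1 : Matrix ι ι 𝕜))⁻¹) (hA : A = Asq ^ 2)
    (hlam : IsGreatest {t : ℝ | (Z - t • 1).PosSemidef} lam) :
    re (Z * A).trace ≤ √(Fintype.card ι * re A.trace) / α + lam * re A.trace ∧
    α * re (Z * Asq).trace ≤ Fintype.card ι + α * √(Fintype.card ι * re A.trace) * lam := by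
  rw [add_comm] at hpd
  have hAsq_pd : Asq.PosDef := hAsq ▸ hpd.inv
  have hinv : (α • Z + ℓ • 1) * Asq = 1 := by
    rw [hAsq, mul_nonsing_inv _ ((isUnit_iff_isUnit_det _).1 hpd.isUnit)]
  have hA_psd : A.PosSemidef := hA ▸ hAsq_pd.posSemidef.pow 2
  have htrA : 0 ≤ re A.trace := re_trace_nonneg_of_posSemidef hA_psd
  have htrAsq : 0 ≤ re Asq.trace := re_trace_nonneg_of_posSemidef hAsq_pd.posSemidef
  have htrAsq_le : re Asq.trace ≤ √(Fintype.card ι * re A.trace) := by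
    simpa [hA, sq, hAsq_pd.isHermitian.eq] using re_trace_le_sqrt_card_mul Asq
  have hlam_nonneg : 0 ≤ lam := hlam.2 (by simpa using hZ)
  have hℓ : -ℓ ≤ α * lam := neg_le_mul_of_mem_upperBounds hα hpd.posSemidef hlam.2
  have htrZA : α * re (Z * A).trace = re Asq.trace - ℓ * re A.trace := by
    simpa [hA, smul_re] using congrArg re (smul_trace_mul_sq_of_mul_eq_one hinv)
  have htrZAsq : α * re (Z * Asq).trace = Fintype.card ι - ℓ * re Asq.trace := by
    simpa [smul_re] using congrArg re (smul_trace_mul_of_mul_eq_one hinv)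
  constructor
  · refine le_of_mul_le_mul_left ?_ hα
    calc α * re (Z * A).trace = re Asq.trace + -ℓ * re A.trace := by rw [htrZA]; ring
      _ ≤ √(Fintype.card ι * re A.trace) + α * lam * re A.trace := by gcongr
      _ = α * (√(Fintype.card ι * re A.trace) / α + lam * re A.trace) := by field_simp
  · calc α * re (Z * Asq).trace = Fintype.card ι + -ℓ * re Asq.trace := by rw [htrZAsq]; ring
      _ ≤ Fintype.card ι + α * lam * √(Fintype.card ι * re A.trace) := by gcongr
      _ = Fintype.card ι + α * √(Fintype.card ι * re A.trace) * lam := by ring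

/-- **Trace bounds for the action matrix (Claim 2.11 of Allen-Zhu–Li–Singh–Wang).**
Let `Z ⪰ 0` be an `n × n` real positive semidefinite matrix, `α > 0`, and `ℓ ∈ ℝ`
such that `ℓ Iₙ + α Z` is positive definite and `A := (α Z + ℓ Iₙ)⁻²` satisfies
`tr(A) = 1`. Then `tr(Z A) ≤ √n / α + λ_min(Z)` and
`α tr(Z A^{1/2}) ≤ n + α √n λ_min(Z)`, where `A^{1/2} = (α Z + ℓ Iₙ)⁻¹` and `λ_min(Z)`
is the minimum eigenvalue of `Z`, characterized as the greatest `t` with `Z - t Iₙ ⪰ 0`. -/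
theorem trace_action_matrix_psd_bounds {n : ℕ} (Z : Matrix (Fin n) (Fin n) ℝ)
    (hZ : Z.PosSemidef) (α : ℝ) (hα : 0 < α) (ℓ lam : ℝ)
    (hpd : (ℓ • (1 : Matrix (Fin n) (Fin n) ℝ) + α • Z).PosDef)
    (A Asq : Matrix (Fin n) (Fin n) ℝ)
    (hAsq : Asq = (α • Z + ℓ • (1 : Matrix (Fin n) (Fin n) ℝ))⁻¹)
    (hA : A = Asq ^ 2)
    (htr : A.trace = 1)
    (hlam : IsGreatest {t : ℝ | (Z - t • 1).PosSemidef} lam) :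
    (Z * A).trace ≤ Real.sqrt n / α + lam ∧
    α * (Z * Asq).trace ≤ n + α * Real.sqrt n * lam := by
  simpa [htr] using trace_action_matrix_psd_bounds_general hZ hα hpd hAsq hA hlam
end

section
/- Fix n ≥ 1, ε ∈ (0, 1), and c_∞ > 0. For i ∈ {1, …, n}, define vectors v_{i,1} := √(1 − ε)·e_i and v_{i,2} := e_i in ℝ^n, costs c_{i,1} := 0 and c_{i,2} := c_∞, and fractional values x_{i,1} := 1 and x_{i,2} := ε, where e_i is the i-th standard basis vector. Then Σ_{i=1}^n Σ_{j ∈ {1,2}} x_{i,j}·v_{i,j} v_{i,j}ᵀ = I_n and ⟨c, x⟩ = ε·n·c_∞, and every z ∈ {0,1}^{2n} (indexed by the pairs (i, j)) satisfying Σ_{i,j} z_{i,j}·v_{i,j} v_{i,j}ᵀ ⪰ I_n must have z_{i,2} = 1 for all i, hence ⟨c, z⟩ ≥ n·c_∞. In particular, for every α ≥ 1 with α·ε ≤ 1/2, one has ⟨c, z⟩ − α·⟨c, x⟩ ≥ n·c_∞/2, showing that the additive error term Ω(n·c_∞) in one-sided spectral rounding is necessary. -/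
open Matrix BigOperators

/-!
All vectors are multiples of basis vectors, so `∑ y_{i,j} v_{i,j} v_{i,j}ᵀ` is diagonal, with `i`-th
entry `(1 - ε) y_{i,1} + y_{i,2}`. Buying only the free vector in direction `i` leaves a deficit
of `ε`: a fractional solution covers it at cost `ε c_∞`, an integral one has to pay the full `c_∞`.
-/

section DiagonalMatrices

variable {ι κ R : Type*}

lemma vecMulVec_single_single [DecidableEq ι] [DecidableEq κ] [MulZeroClass R]
    (i : ι) (j : κ) (a b : R) :
    vecMulVec (Pi.single i a) (Pi.single j b) = Matrix.single i j (a * b) := by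
  ext k l
  simp only [vecMulVec_apply, Pi.single_apply, Matrix.single_apply, ite_zero_mul_ite_zero,
    eq_comm]

lemma sum_smul_vecMulVec_single_eq_diagonal [DecidableEq ι] [Fintype ι] [Fintype κ]
    [NonUnitalNonAssocSemiring R] (y a : ι × κ → R) :
    ∑ p, y p • vecMulVec (Pi.single p.1 (a p)) (Pi.single p.1 (a p)) =
      diagonal fun i => ∑ j, y (i, j) * (a (i, j) * a (i, j)) := by
  rw [← sum_single_eq_diagonal, Fintype.sum_prod_type]
  refine Finset.sum_congr rfl fun i _ => ?_
  simp only [vecMulVec_single_single, smul_single, smul_eq_mul]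
  exact (map_sum (singleAddMonoidHom (α := R) i i) _ _).symm

lemma diag_le_diag_of_posSemidef_sub [Ring R] [PartialOrder R] [StarRing R] [IsOrderedAddMonoid R]
    {A B : Matrix ι ι R} (h : (A - B).PosSemidef) (i : ι) : B i i ≤ A i i :=
  sub_nonneg.mp h.diag_nonneg

end DiagonalMatrices

section TightExample

variable {ι : Type*}

/-- The vectors `v_{i,1} = √(1 - ε) eᵢ` and `v_{i,2} = eᵢ` of the tight example; the second index
is shifted to start at `0`. -/
noncomputable def tightVector [DecidableEq ι] (ε : ℝ) (p : ι × Fin 2) : ι → ℝ :=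
  Pi.single p.1 (if p.2 = 0 then √(1 - ε) else 1)

/-- The costs `c_{i,1} = 0` and `c_{i,2} = c_∞` of the tight example. -/
def tightCost (cinf : ℝ) (p : ι × Fin 2) : ℝ :=
  if p.2 = 0 then 0 else cinf

/-- The fractional solution `x_{i,1} = 1`, `x_{i,2} = ε` of the tight example. -/
def tightFractional (ε : ℝ) (p : ι × Fin 2) : ℝ :=
  if p.2 = 0 then 1 else ε

lemma tightVector_apply [DecidableEq ι] (ε : ℝ) (p : ι × Fin 2) (w : ι) :
    tightVector ε p w = (if p.2 = 0 then √(1 - ε) else 1) * (if w = p.1 then 1 else 0) := by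
  simp only [tightVector, Pi.single_apply, mul_ite, mul_one, mul_zero]

variable [Fintype ι] {ε : ℝ}

lemma sum_smul_vecMulVec_tightVector [DecidableEq ι] (hε : ε ≤ 1) (y : ι × Fin 2 → ℝ) :
    ∑ p, y p • vecMulVec (tightVector ε p) (tightVector ε p) =
      diagonal fun i => y (i, 0) * (1 - ε) + y (i, 1) := by
  refine (sum_smul_vecMulVec_single_eq_diagonal y _).trans ?_
  simp [Real.mul_self_sqrt (sub_nonneg.mpr hε)]

lemma sum_tightFractional_smul_vecMulVec_tightVector [DecidableEq ι] (hε : ε ≤ 1) :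
    ∑ p : ι × Fin 2, tightFractional ε p • vecMulVec (tightVector ε p) (tightVector ε p) = 1 := by
  rw [sum_smul_vecMulVec_tightVector hε]
  simp [tightFractional]

lemma le_of_posSemidef_sum_tightVector_sub_one [DecidableEq ι] (hε : ε ≤ 1)
    {z : ι × Fin 2 → ℝ} {i : ι} (hz : z (i, 0) ≤ 1)
    (hpsd : (∑ p, z p • vecMulVec (tightVector ε p) (tightVector ε p) - 1).PosSemidef) :
    ε ≤ z (i, 1) := by
  rw [sum_smul_vecMulVec_tightVector hε] at hpsd
  have hdiag : 1 ≤ z (i, 0) * (1 - ε) + z (i, 1) := by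
    simpa only [one_apply_eq, diagonal_apply_eq] using diag_le_diag_of_posSemidef_sub hpsd i
  have hfree : z (i, 0) * (1 - ε) ≤ 1 - ε := mul_le_of_le_one_left (sub_nonneg.mpr hε) hz
  linarith

lemma eq_one_of_posSemidef_sum_tightVector_sub_one [DecidableEq ι] (hε0 : 0 < ε) (hε1 : ε ≤ 1)
    {z : ι × Fin 2 → ℝ} (hz : ∀ p, z p = 0 ∨ z p = 1)
    (hpsd : (∑ p, z p • vecMulVec (tightVector ε p) (tightVector ε p) - 1).PosSemidef) (i : ι) :
    z (i, 1) = 1 := by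
  have hfree : z (i, 0) ≤ 1 := by rcases hz (i, 0) with h | h <;> simp [h]
  have hpos : 0 < z (i, 1) :=
    hε0.trans_le (le_of_posSemidef_sum_tightVector_sub_one hε1 hfree hpsd)
  exact (hz (i, 1)).resolve_left hpos.ne'

lemma sum_tightCost_mul (cinf : ℝ) (y : ι × Fin 2 → ℝ) :
    ∑ p, tightCost cinf p * y p = cinf * ∑ i, y (i, 1) := by
  simp [tightCost, Fintype.sum_prod_type, Finset.mul_sum]

lemma sum_tightCost_mul_tightFractional (cinf ε : ℝ) :
    ∑ p : ι × Fin 2, tightCost cinf p * tightFractional ε p = ε * Fintype.card ι * cinf := by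
  rw [sum_tightCost_mul]
  simp only [tightFractional, one_ne_zero, if_false, Finset.sum_const, Finset.card_univ,
    nsmul_eq_mul]
  ring

lemma sum_tightCost_mul_of_eq_one (cinf : ℝ) {z : ι × Fin 2 → ℝ} (hz : ∀ i, z (i, 1) = 1) :
    ∑ p, tightCost cinf p * z p = Fintype.card ι * cinf := by
  rw [sum_tightCost_mul, mul_comm]
  simp [hz]

end TightExample

/-- **Tight example: the additive error `Ω(n c_∞)` is necessary for one-sided spectral
rounding (Example 3.14).** With design points indexed by pairs `(i, j) ∈ [n] × {1, 2}`
(here `j : Fin 2`, with `j = 0` playing the role of `1` and `j = 1` the role of `2`):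
`v_{i,1} := √(1-ε) eᵢ`, `v_{i,2} := eᵢ`, `c_{i,1} := 0`, `c_{i,2} := c_∞`, `x_{i,1} := 1`,
`x_{i,2} := ε`. Then `∑ x_{i,j} v_{i,j} v_{i,j}ᵀ = Iₙ`, `⟨c, x⟩ = ε n c_∞`, and every
`z ∈ {0,1}^{2n}` with `∑ z_{i,j} v_{i,j} v_{i,j}ᵀ ⪰ Iₙ` has `z_{i,2} = 1` for all `i`,
hence `⟨c, z⟩ ≥ n c_∞`; in particular, for all `α ≥ 1` with `α ε ≤ 1/2`,
`⟨c, z⟩ - α ⟨c, x⟩ ≥ n c_∞ / 2`. -/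
theorem one_sided_rounding_additive_error_necessary {n : ℕ} (hn : 1 ≤ n)
    (ε cinf : ℝ) (hε0 : 0 < ε) (hε1 : ε < 1) (hcinf : 0 < cinf)
    (v : Fin n × Fin 2 → Fin n → ℝ)
    (hv : v = fun p w => (if p.2 = 0 then Real.sqrt (1 - ε) else 1) *
      (if w = p.1 then 1 else 0))
    (c x : Fin n × Fin 2 → ℝ)
    (hcdef : c = fun p => if p.2 = 0 then 0 else cinf)
    (hxdef : x = fun p => if p.2 = 0 then 1 else ε) :
    (∑ p, x p • vecMulVec (v p) (v p)) = (1 : Matrix (Fin n) (Fin n) ℝ) ∧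
    (∑ p, c p * x p) = ε * n * cinf ∧
    ∀ z : Fin n × Fin 2 → ℝ, (∀ p, z p = 0 ∨ z p = 1) →
      ((∑ p, z p • vecMulVec (v p) (v p)) - (1 : Matrix (Fin n) (Fin n) ℝ)).PosSemidef →
      (∀ i : Fin n, z (i, 1) = 1) ∧
      (n : ℝ) * cinf ≤ (∑ p, c p * z p) ∧
      ∀ α : ℝ, 1 ≤ α → α * ε ≤ 1/2 →
        (n : ℝ) * cinf / 2 ≤ (∑ p, c p * z p) - α * (∑ p, c p * x p) := by
  obtain rfl : v = tightVector ε := hv.trans <| by ext p w; rw [tightVector_apply]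
  obtain rfl : c = tightCost cinf := hcdef
  obtain rfl : x = tightFractional ε := hxdef
  have hcx := sum_tightCost_mul_tightFractional (ι := Fin n) cinf ε
  rw [Fintype.card_fin] at hcx
  refine ⟨sum_tightFractional_smul_vecMulVec_tightVector hε1.le, hcx, fun z hz hpsd => ?_⟩
  have hz1 := eq_one_of_posSemidef_sum_tightVector_sub_one hε0 hε1.le hz hpsd
  have hcz := sum_tightCost_mul_of_eq_one cinf hz1
  rw [Fintype.card_fin] at hcz
  refine ⟨hz1, hcz.ge, fun α _ hα => ?_⟩
  rw [hcz, hcx]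
  calc (n : ℝ) * cinf / 2 = n * cinf - 1 / 2 * (n * cinf) := by ring
    _ ≤ n * cinf - α * ε * (n * cinf) := by gcongr
    _ = n * cinf - α * (ε * n * cinf) := by ring
end
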